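/- Let A be a nonempty set of graphons that is compact with respect to the pseudometric δ_□, and for n ≥ 1 and δ > 0 let N_□(n,δ;A) be the number of simple graphs G on {1,…,n} with inf_{W∈A} δ_□(W_G, W) ≤ δ. Then there exists W* ∈ A with Ent(W*) = sup_{W∈A} Ent(W), and lim_{δ→0⁺} liminf_{n→∞} (log₂ N_□(n,δ;A))/C(n,2) = lim_{δ→0⁺} limsup_{n→∞} (log₂ N_□(n,δ;A))/C(n,2) = sup_{W∈A} Ent(W), where C(n,2) = n(n-1)/2. -/

import Mathlib

open MeasureTheory Set Filter

noncomputable section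

/-- A graphon: a symmetric measurable function `ℝ → ℝ → ℝ` with values in `[0,1]`
(only its values on `[0,1]²` matter). -/
def IsGraphon (W : ℝ → ℝ → ℝ) : Prop :=
  (∀ x y, W x y = W y x) ∧ Measurable (Function.uncurry W) ∧
    ∀ x y, W x y ∈ Set.Icc (0 : ℝ) 1

/-- The cut norm `‖U‖_□`, the supremum over measurable `S, T ⊆ [0,1]` of
`|∫_{S×T} U|`. -/
def cutNorm (U : ℝ → ℝ → ℝ) : ℝ :=
  sSup { r : ℝ | ∃ S T : Set ℝ, MeasurableSet S ∧ MeasurableSet T ∧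
    S ⊆ Set.Icc 0 1 ∧ T ⊆ Set.Icc 0 1 ∧
    r = |∫ p in S ×ˢ T, U p.1 p.2| }

/-- `d_□(W₁, W₂) = ‖W₁ - W₂‖_□`. -/
def dCut (W₁ W₂ : ℝ → ℝ → ℝ) : ℝ := cutNorm (fun x y => W₁ x y - W₂ x y)

/-- A Lebesgue-measure-preserving map `[0,1] → [0,1]`. -/
def IsMPSelf (σ : ℝ → ℝ) : Prop :=
  MeasureTheory.MeasurePreserving σ
      (MeasureTheory.volume.restrict (Set.Icc (0:ℝ) 1))
      (MeasureTheory.volume.restrict (Set.Icc (0:ℝ) 1)) ∧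
    Set.MapsTo σ (Set.Icc (0:ℝ) 1) (Set.Icc (0:ℝ) 1)

/-- The cut distance `δ_□(W₁, W₂)`. -/
def deltaCut (W₁ W₂ : ℝ → ℝ → ℝ) : ℝ :=
  sInf { r : ℝ | ∃ σ₁ σ₂ : ℝ → ℝ, IsMPSelf σ₁ ∧ IsMPSelf σ₂ ∧
    r = cutNorm (fun x y => W₁ (σ₁ x) (σ₁ y) - W₂ (σ₂ x) (σ₂ y)) }

/-- The binary entropy function `h` (base-2 logarithm; `logb 2 0 = 0` by convention,
so `h 0 = h 1 = 0`). -/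
def binEnt (x : ℝ) : ℝ := -x * Real.logb 2 x - (1 - x) * Real.logb 2 (1 - x)

/-- `h̃ x = h (min x (1/2))`. -/
def htilde (x : ℝ) : ℝ := binEnt (min x (1/2))

/-- The entropy `Ent(W) = ∫₀¹∫₀¹ h(W(x,y)) dx dy` of a graphon. -/
def graphonEnt (W : ℝ → ℝ → ℝ) : ℝ :=
  ∫ x in Set.Icc (0:ℝ) 1, ∫ y in Set.Icc (0:ℝ) 1, binEnt (W x y)

open Classical in
/-- The graphon `W_G` of a simple graph `G` on `{1, …, n}` (vertices as `Fin n`,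
vertex `i : Fin n` representing `i+1`): `W_G x y = 1` iff `⌈nx⌉⌈ny⌉ ∈ E(G)`. -/
def graphonOfGraph {n : ℕ} (G : SimpleGraph (Fin n)) : ℝ → ℝ → ℝ := fun x y =>
  if ∃ i j : Fin n, G.Adj i j ∧ ⌈(n : ℝ) * x⌉ = ((i : ℕ) : ℤ) + 1 ∧
      ⌈(n : ℝ) * y⌉ = ((j : ℕ) : ℤ) + 1
  then 1 else 0

/-- A labelled graph class: a set of graphs on `{1,…,n}` for each `n`. -/
abbrev GraphClass := ∀ n : ℕ, Set (SimpleGraph (Fin n))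

/-- A graph class is closed under relabelling by permutations. -/
def IsGraphClass (Q : GraphClass) : Prop :=
  ∀ (n : ℕ) (π : Equiv.Perm (Fin n)) (G : SimpleGraph (Fin n)),
    G ∈ Q n → G.comap ⇑π ∈ Q n

/-- A hereditary graph class: a graph class closed under taking induced subgraphs
(relabelled by the order-preserving bijection). -/
def IsHereditary (Q : GraphClass) : Prop :=
  IsGraphClass Q ∧
    ∀ (m n : ℕ) (f : Fin m → Fin n), StrictMono f →
      ∀ G ∈ Q n, G.comap f ∈ Q m

/-- `Q̂`: the set of graphons which are limits (in cut distance) of sequences of graphs in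
the class `Q` whose orders tend to infinity. -/
def limitSet (Q : GraphClass) : Set (ℝ → ℝ → ℝ) :=
  { W | IsGraphon W ∧
    ∃ (nk : ℕ → ℕ) (Gk : ∀ k, SimpleGraph (Fin (nk k))),
      (∀ k, Gk k ∈ Q (nk k)) ∧ Filter.Tendsto nk Filter.atTop Filter.atTop ∧
      Filter.Tendsto (fun k => deltaCut (graphonOfGraph (Gk k)) W) Filter.atTop (nhds 0) }

/-- `C(n,2) = n(n-1)/2` as a real number. -/
def choose2 (n : ℕ) : ℝ := (n : ℝ) * ((n : ℝ) - 1) / 2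

open Classical in
/-- The step function `E[W | P]` obtained by averaging `W` over the products of the
parts of the partition `P` of `[0,1]`. -/
def condExpPart {k : ℕ} (P : Fin k → Set ℝ) (W : ℝ → ℝ → ℝ) : ℝ → ℝ → ℝ := fun x y =>
  ∑ i : Fin k, ∑ j : Fin k,
    if x ∈ P i ∧ y ∈ P j then ⨍ p in (P i) ×ˢ (P j), W p.1 p.2 else 0

/-- `W̄_n`: the step function of `W` for the partition of `[0,1]` into `n` consecutive
intervals of length `1/n`. -/
def barStep (n : ℕ) (W : ℝ → ℝ → ℝ) : ℝ → ℝ → ℝ :=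
  condExpPart (fun i : Fin n => Set.Ioc (((i : ℕ) : ℝ)/n) ((((i : ℕ) : ℝ) + 1)/n)) W

/-- `N̂_□(n, δ; W)`: the number of graphs `G` on `{1,…,n}` with `d_□(W_G, W) ≤ δ`. -/
def NhatCut (n : ℕ) (δ : ℝ) (W : ℝ → ℝ → ℝ) : ℕ :=
  Nat.card {G : SimpleGraph (Fin n) // dCut (graphonOfGraph G) W ≤ δ}

/-- `N_□(n, δ; W)`: the number of graphs `G` on `{1,…,n}` with `δ_□(W_G, W) ≤ δ`. -/
def NCut (n : ℕ) (δ : ℝ) (W : ℝ → ℝ → ℝ) : ℕ :=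
  Nat.card {G : SimpleGraph (Fin n) // deltaCut (graphonOfGraph G) W ≤ δ}

open Classical in
/-- The induced density `p(F; W)` of a graph `F` on `{1,…,k}` in a graphon `W`. -/
def inducedDensity {k : ℕ} (F : SimpleGraph (Fin k)) (W : ℝ → ℝ → ℝ) : ℝ :=
  ∫ x : Fin k → ℝ in Set.univ.pi (fun _ : Fin k => Set.Icc (0:ℝ) 1),
    ∏ i : Fin k, ∏ j : Fin k,
      if i < j then (if F.Adj i j then W (x i) (x j) else 1 - W (x i) (x j)) else 1

open Classical in
/-- The randomness support graphon `1_{rand(W)}` of `W`. -/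
def randIndicator (W : ℝ → ℝ → ℝ) : ℝ → ℝ → ℝ := fun x y =>
  if 0 < W x y ∧ W x y < 1 then 1 else 0

/-- A kernel `U` is `K_r`-free if `∏_{i<j} U(x_i, x_j) = 0` for a.e. `x ∈ [0,1]^r`. -/
def KFree (r : ℕ) (U : ℝ → ℝ → ℝ) : Prop :=
  ∀ᵐ x ∂(MeasureTheory.volume.restrict (Set.univ.pi fun _ : Fin r => Set.Icc (0:ℝ) 1)),
    (∏ i : Fin r, ∏ j : Fin r, if i < j then U (x i) (x j) else 1) = 0

open Classical in
/-- The graphon `W^{(r,s)}`: equal to `1/2` off the diagonal blocks, `1` on the first `s`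
diagonal blocks `I_i × I_i`, and `0` on the remaining diagonal blocks. -/
def Wrs (r s : ℕ) : ℝ → ℝ → ℝ := fun x y =>
  if ∃ i j : Fin r, i ≠ j ∧ x ∈ Set.Ioc (((i:ℕ):ℝ)/r) ((((i:ℕ):ℝ)+1)/r) ∧
      y ∈ Set.Ioc (((j:ℕ):ℝ)/r) ((((j:ℕ):ℝ)+1)/r)
  then 1/2
  else if ∃ i : Fin r, (i:ℕ) < s ∧ x ∈ Set.Ioc (((i:ℕ):ℝ)/r) ((((i:ℕ):ℝ)+1)/r) ∧
      y ∈ Set.Ioc (((i:ℕ):ℝ)/r) ((((i:ℕ):ℝ)+1)/r)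
  then 1 else 0

/-- `E_r = ⋃_{i ≠ j} I_i × I_j` where `I_i`, `i = 1, …, r`, are the consecutive
intervals of length `1/r` in `[0,1]`. -/
def Er (r : ℕ) : Set (ℝ × ℝ) :=
  ⋃ (i : Fin r) (j : Fin r) (_ : i ≠ j),
    (Set.Ioc (((i:ℕ):ℝ)/r) ((((i:ℕ):ℝ)+1)/r)) ×ˢ (Set.Ioc (((j:ℕ):ℝ)/r) ((((j:ℕ):ℝ)+1)/r))

/-- `R_r`: the set of graphons equal to `1/2` on `E_r` and `{0,1}`-valued elsewhere
on `[0,1]²`. -/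
def Rset (r : ℕ) : Set (ℝ → ℝ → ℝ) :=
  { W | IsGraphon W ∧ (∀ p ∈ Er r, W p.1 p.2 = 1/2) ∧
      ∀ p ∈ ((Set.Icc (0:ℝ) 1) ×ˢ (Set.Icc (0:ℝ) 1)) \ Er r,
        W p.1 p.2 = 0 ∨ W p.1 p.2 = 1 }

/-- A graphon is random-free if it is `{0,1}`-valued a.e. on `[0,1]²`. -/
def IsRandomFree (W : ℝ → ℝ → ℝ) : Prop :=
  ∀ᵐ p ∂(MeasureTheory.volume.restrict ((Set.Icc (0:ℝ) 1) ×ˢ (Set.Icc (0:ℝ) 1))),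
    W (Prod.fst p) (Prod.snd p) = 0 ∨ W (Prod.fst p) (Prod.snd p) = 1


/-- `N_□(n, δ; A)`: the number of graphs `G` on `{1,…,n}` with
`inf_{W ∈ A} δ_□(W_G, W) ≤ δ`. -/
def NCutSet (n : ℕ) (δ : ℝ) (A : Set (ℝ → ℝ → ℝ)) : ℕ :=
  Nat.card {G : SimpleGraph (Fin n) //
    sInf ((fun W => deltaCut (graphonOfGraph G) W) '' A) ≤ δ}

/-- Compactness (sequential, equivalent for pseudometric spaces) of a set of graphons
with respect to the pseudometric `δ_□`. -/
def CutCompact (A : Set (ℝ → ℝ → ℝ)) : Prop :=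
  ∀ f : ℕ → (ℝ → ℝ → ℝ), (∀ m, f m ∈ A) →
    ∃ W ∈ A, ∃ φ : ℕ → ℕ, StrictMono φ ∧
      Filter.Tendsto (fun m => deltaCut (f (φ m)) W) Filter.atTop (nhds 0)

/-!
A symmetric matrix `m` with entries in `(0, 1)`, a stochastic block model, is a code for graphs: a
pair of vertices of types `i` and `j` costs `crossEnt x (m i j)` bits, where `x` says whether the
pair is an edge. For a graphon `U` and a fractional partition of `[0, 1]` into types, integrating
this cost gives a code length, which is at least `graphonEnt U` by Gibbs' inequality and comes
arbitrarily close to it for a fine step function `m`. Since `crossEnt` is affine in its first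
argument, a perturbation of `U` which is small in cut distance changes the code length only a
little, so the entropy is upper semicontinuous and attains its maximum on a compact set.

*Upper bound.* As there are countably many rational block models, compactness yields finitely many
of them which encode every graph close to `A` with `sup Ent + ε` bits per pair. By Kraft's
inequality, a block model with `k` types encodes at most `k ^ n * 2 ^ (n ^ 2 * c / 2)` graphs with
at most `c` bits per pair.

*Lower bound.* Join the vertices `u` and `v` independently with probability the average of the
maximiser `W` over the cell of `(u, v)`. By Hoeffding's inequality and a union bound over pairs of
vertex sets, the random graph is close to `W` in cut norm with probability tending to `1`. By
Jensen's inequality it has entropy at least about `graphonEnt W * n.choose 2`, so it must be spread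
over correspondingly many graphs.
-/

section Measures

variable {α β ι : Type*} [MeasurableSpace α] [MeasurableSpace β]

lemma le_of_sum_eq [Fintype ι] {ν : ι → Measure α} {μ : Measure α} (h : ∑ i, ν i = μ) (i : ι) :
    ν i ≤ μ := by
  rw [← h, Measure.le_iff']
  intro s
  rw [Measure.finsetSum_apply]
  exact Finset.single_le_sum (f := fun i => ν i s) (fun _ _ => zero_le) (Finset.mem_univ i)

lemma isFiniteMeasure_of_sum_eq [Fintype ι] {ν : ι → Measure α} {μ : Measure α}
    [IsFiniteMeasure μ] (h : ∑ i, ν i = μ) (i : ι) : IsFiniteMeasure (ν i) :=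
  isFiniteMeasure_of_le μ (le_of_sum_eq h i)

lemma sum_withDensity [Fintype ι] (μ : Measure α) {f : ι → α → ENNReal}
    (hf : ∀ i, Measurable (f i)) :
    ∑ i, μ.withDensity (f i) = μ.withDensity (fun x => ∑ i, f i x) := by
  ext s hs
  simp only [Measure.finsetSum_apply, withDensity_apply _ hs,
    lintegral_finsetSum _ fun i _ => hf i]

/-- The densities of the `ν i` are composed with `τ`. -/
lemma exists_sum_eq_map_eq [Fintype ι] {μ : Measure α} {ρ : Measure β} [IsFiniteMeasure ρ]
    {ν : ι → Measure β} (hν : ∑ i, ν i = ρ) {τ : α → β} (hτ : MeasurePreserving τ μ ρ) :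
    ∃ ν' : ι → Measure α, ∑ i, ν' i = μ ∧ ∀ i, (ν' i).map τ = ν i := by
  have hle := le_of_sum_eq hν
  have hfin := isFiniteMeasure_of_sum_eq hν
  set f : ι → β → ENNReal := fun i => (ν i).rnDeriv ρ
  have hf : ∀ i, Measurable (f i) := fun i => Measure.measurable_rnDeriv _ _
  have hfν : ∀ i, ρ.withDensity (f i) = ν i := fun i =>
    Measure.withDensity_rnDeriv_eq _ _ (Measure.absolutelyContinuous_of_le (hle i))
  have hsum : ∀ᵐ y ∂ρ, ∑ i, f i y = 1 := by
    refine (withDensity_eq_iff_of_sigmaFinite (Finset.univ.aemeasurable_fun_sum fun i _ =>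
      (hf i).aemeasurable) aemeasurable_const).1 ?_
    rw [← sum_withDensity ρ hf, Finset.sum_congr rfl fun i _ => hfν i, hν]
    exact withDensity_one.symm
  refine ⟨fun i => μ.withDensity fun x => f i (τ x), ?_, fun i => ?_⟩
  · exact (sum_withDensity μ fun i => (hf i).comp hτ.measurable).trans
      ((withDensity_congr_ae (hτ.quasiMeasurePreserving.ae hsum)).trans withDensity_one)
  · ext s hs
    rw [Measure.map_apply hτ.measurable hs, withDensity_apply _ (hτ.measurable hs), ← hfν i,
      withDensity_apply _ hs]
    exact hτ.setLIntegral_comp_preimage hs (hf i)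

lemma integral_prod_eq_sum_sum {κ : Type*} [Fintype ι] [Fintype κ] {μ : Measure α}
    {ρ : Measure β} [IsFiniteMeasure μ] [IsFiniteMeasure ρ] {μ' : ι → Measure α}
    {ρ' : κ → Measure β} (hμ : ∑ i, μ' i = μ) (hρ : ∑ j, ρ' j = ρ) {f : α × β → ℝ}
    (hf : Integrable f (μ.prod ρ)) :
    ∫ p, f p ∂(μ.prod ρ) = ∑ i, ∑ j, ∫ p, f p ∂((μ' i).prod (ρ' j)) := by
  have := isFiniteMeasure_of_sum_eq hμ
  have := isFiniteMeasure_of_sum_eq hρ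
  have h : μ.prod ρ = ∑ q : ι × κ, (μ' q.1).prod (ρ' q.2) := by
    rw [← Measure.sum_fintype, ← Measure.prod_sum, Measure.sum_fintype, Measure.sum_fintype, hμ, hρ]
  rw [h, integral_finsetSum_measure fun q _ => hf.mono_measure
    (Measure.prod_mono (le_of_sum_eq hμ q.1) (le_of_sum_eq hρ q.2)), Fintype.sum_prod_type]

lemma integral_le_setIntegral_pos {μ μ' : Measure α} (h : μ ≤ μ') {f : α → ℝ}
    (hf : Integrable f μ') (hm : Measurable f) :
    ∫ x, f x ∂μ ≤ ∫ x in {x | 0 < f x}, f x ∂μ' := by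
  have hs : MeasurableSet {x | 0 < f x} := measurableSet_lt measurable_const hm
  calc ∫ x, f x ∂μ ≤ ∫ x, max (f x) 0 ∂μ :=
        integral_mono (hf.mono_measure h) (hf.mono_measure h).pos_part fun _ => le_max_left _ _
    _ ≤ ∫ x, max (f x) 0 ∂μ' :=
        integral_mono_measure h (Eventually.of_forall fun _ => le_max_right _ _) hf.pos_part
    _ = ∫ x in {x | 0 < f x}, f x ∂μ' := by
        rw [← integral_indicator hs]
        refine integral_congr_ae (Eventually.of_forall fun x => ?_)
        by_cases hx : 0 < f x
        · simp [indicator, hx, hx.le]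
        · simp [indicator, hx, not_lt.1 hx]

lemma exists_integral_prod_le_restrict_left {μ μ' : Measure α} {ν : Measure β} [SFinite μ']
    [SFinite μ] [SFinite ν] (h : μ ≤ μ') {f : α × β → ℝ} (hf : Integrable f (μ'.prod ν))
    (hm : Measurable f) :
    ∃ S, MeasurableSet S ∧ ∫ p, f p ∂(μ.prod ν) ≤ ∫ p, f p ∂((μ'.restrict S).prod ν) := by
  have hΦ : Measurable fun x => ∫ y, f (x, y) ∂ν :=
    (hm.stronglyMeasurable.integral_prod_right' (ν := ν)).measurable
  refine ⟨{x | 0 < ∫ y, f (x, y) ∂ν}, measurableSet_lt measurable_const hΦ, ?_⟩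
  rw [integral_prod _ (hf.mono_measure (Measure.prod_mono h le_rfl)),
    integral_prod _ (hf.mono_measure (Measure.prod_mono Measure.restrict_le_self le_rfl))]
  exact integral_le_setIntegral_pos h hf.integral_prod_left hΦ

lemma exists_integral_prod_le_setIntegral {μ μ' : Measure α} {ν ν' : Measure β} [SFinite μ]
    [SFinite μ'] [SFinite ν] [SFinite ν'] (hμ : μ ≤ μ') (hν : ν ≤ ν') {f : α × β → ℝ}
    (hf : Integrable f (μ'.prod ν')) (hm : Measurable f) :
    ∃ S T, MeasurableSet S ∧ MeasurableSet T ∧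
      ∫ p, f p ∂(μ.prod ν) ≤ ∫ p in S ×ˢ T, f p ∂(μ'.prod ν') := by
  obtain ⟨S, hS, hSle⟩ := exists_integral_prod_le_restrict_left hμ
    (hf.mono_measure (Measure.prod_mono le_rfl hν)) hm
  have hswap : Integrable (f ∘ Prod.swap) (ν'.prod (μ'.restrict S)) :=
    (hf.mono_measure (Measure.prod_mono Measure.restrict_le_self le_rfl)).swap
  obtain ⟨T, hT, hTle⟩ := exists_integral_prod_le_restrict_left hν hswap (hm.comp measurable_swap)
  simp only [Function.comp_def, integral_prod_swap] at hTle
  exact ⟨S, T, hS, hT, by rw [← Measure.prod_restrict]; exact hSle.trans hTle⟩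

end Measures

/-- Lebesgue measure on `[0,1]`, as a measure on `ℝ`. -/
def unitVolume : Measure ℝ := volume.restrict (Icc 0 1)

instance : IsProbabilityMeasure unitVolume := ⟨by simp [unitVolume]⟩

lemma unitVolume_prod_restrict (S T : Set ℝ) :
    (unitVolume.prod unitVolume).restrict (S ×ˢ T) =
      volume.restrict ((S ∩ Icc 0 1) ×ˢ (T ∩ Icc 0 1)) := by
  rw [← Measure.prod_restrict, unitVolume, Measure.restrict_restrict' measurableSet_Icc,
    Measure.restrict_restrict' measurableSet_Icc, Measure.prod_restrict, Measure.volume_eq_prod]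

section CutNorm

variable {D : ℝ → ℝ → ℝ}

lemma cutNorm_nonneg (D : ℝ → ℝ → ℝ) : 0 ≤ cutNorm D :=
  Real.sSup_nonneg (by rintro r ⟨S, T, -, -, -, -, rfl⟩; exact abs_nonneg _)

lemma cutNorm_neg (D : ℝ → ℝ → ℝ) : cutNorm (fun x y => -D x y) = cutNorm D := by
  simp only [cutNorm, integral_neg, abs_neg]

lemma cutNorm_le {c : ℝ} (h : ∀ S T : Set ℝ, MeasurableSet S → MeasurableSet T →
    |∫ p in S ×ˢ T, D p.1 p.2 ∂(unitVolume.prod unitVolume)| ≤ c) : cutNorm D ≤ c := by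
  refine csSup_le ⟨_, ∅, ∅, .empty, .empty, by simp, by simp, rfl⟩ ?_
  rintro r ⟨S, T, hS, hT, hSI, hTI, rfl⟩
  have := h S T hS hT
  rwa [unitVolume_prod_restrict, inter_eq_left.2 hSI, inter_eq_left.2 hTI] at this

lemma abs_setIntegral_le_cutNorm
    (hD : Integrable (fun p : ℝ × ℝ => D p.1 p.2) (unitVolume.prod unitVolume))
    {S T : Set ℝ} (hS : MeasurableSet S) (hT : MeasurableSet T) :
    |∫ p in S ×ˢ T, D p.1 p.2 ∂(unitVolume.prod unitVolume)| ≤ cutNorm D := by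
  refine le_csSup ⟨∫ p, |D p.1 p.2| ∂(unitVolume.prod unitVolume), ?_⟩
    ⟨S ∩ Icc 0 1, T ∩ Icc 0 1, hS.inter measurableSet_Icc, hT.inter measurableSet_Icc,
      inter_subset_right, inter_subset_right, by rw [unitVolume_prod_restrict]⟩
  rintro r ⟨S, T, -, -, hSI, hTI, rfl⟩
  rw [← inter_eq_left.2 hSI, ← inter_eq_left.2 hTI, ← unitVolume_prod_restrict]
  exact abs_integral_le_integral_abs.trans
    (setIntegral_le_integral hD.abs (Eventually.of_forall fun _ => abs_nonneg _))

/-- The cut norm also bounds integrals against fractional sets: the integral is linear in each of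
the two measures, so its extrema are attained at restrictions of `unitVolume` to sets. -/
lemma abs_integral_prod_le_cutNorm (hm : Measurable (Function.uncurry D))
    (hD : Integrable (fun p : ℝ × ℝ => D p.1 p.2) (unitVolume.prod unitVolume))
    {μ ν : Measure ℝ} (hμ : μ ≤ unitVolume) (hν : ν ≤ unitVolume) :
    |∫ p, D p.1 p.2 ∂(μ.prod ν)| ≤ cutNorm D := by
  have := isFiniteMeasure_of_le _ hμ
  have := isFiniteMeasure_of_le _ hν
  rw [abs_le']
  constructor
  · obtain ⟨S, T, hS, hT, h⟩ := exists_integral_prod_le_setIntegral hμ hν hD hm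
    exact h.trans ((le_abs_self _).trans (abs_setIntegral_le_cutNorm hD hS hT))
  · obtain ⟨S, T, hS, hT, h⟩ := exists_integral_prod_le_setIntegral hμ hν hD.neg hm.neg
    rw [← integral_neg, ← cutNorm_neg]
    exact h.trans ((le_abs_self _).trans
      (abs_setIntegral_le_cutNorm (D := fun x y => -D x y) hD.neg hS hT))

end CutNorm

lemma isMPSelf_id : IsMPSelf id := ⟨MeasurePreserving.id _, mapsTo_id _⟩

lemma deltaCut_nonneg (U W : ℝ → ℝ → ℝ) : 0 ≤ deltaCut U W :=
  Real.sInf_nonneg (by rintro r ⟨σ, τ, -, -, rfl⟩; exact cutNorm_nonneg _)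

lemma deltaCut_le_dCut (U W : ℝ → ℝ → ℝ) : deltaCut U W ≤ dCut U W :=
  csInf_le ⟨0, by rintro r ⟨σ, τ, -, -, rfl⟩; exact cutNorm_nonneg _⟩
    ⟨id, id, isMPSelf_id, isMPSelf_id, rfl⟩

lemma exists_cutNorm_lt_of_deltaCut_lt {U W : ℝ → ℝ → ℝ} {δ : ℝ} (h : deltaCut U W < δ) :
    ∃ σ τ : ℝ → ℝ, MeasurePreserving σ unitVolume unitVolume ∧
      MeasurePreserving τ unitVolume unitVolume ∧
      cutNorm (fun x y => U (σ x) (σ y) - W (τ x) (τ y)) < δ := by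
  obtain ⟨r, ⟨σ, τ, hσ, hτ, rfl⟩, hr⟩ :=
    exists_lt_of_csInf_lt (by exact ⟨_, id, id, isMPSelf_id, isMPSelf_id, rfl⟩) h
  exact ⟨σ, τ, hσ.1, hτ.1, hr⟩

section Graphon

variable {U : ℝ → ℝ → ℝ}

lemma IsGraphon.integrable_comp (hU : IsGraphon U) {φ : ℝ → ℝ} (hφ : Continuous φ)
    (μ : Measure (ℝ × ℝ)) [IsFiniteMeasure μ] : Integrable (fun p => φ (U p.1 p.2)) μ := by
  obtain ⟨C, hC⟩ := isCompact_Icc.exists_bound_of_continuousOn (s := Icc (0 : ℝ) 1)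
    hφ.continuousOn
  exact .of_bound (hφ.measurable.comp hU.2.1).aestronglyMeasurable C
    (Eventually.of_forall fun p => hC _ (hU.2.2 p.1 p.2))

lemma IsGraphon.integrable (hU : IsGraphon U) (μ : Measure (ℝ × ℝ)) [IsFiniteMeasure μ] :
    Integrable (fun p => U p.1 p.2) μ :=
  hU.integrable_comp continuous_id μ

lemma IsGraphon.comp (hU : IsGraphon U) {σ : ℝ → ℝ} (hσ : Measurable σ) :
    IsGraphon fun x y => U (σ x) (σ y) :=
  ⟨fun _ _ => hU.1 _ _, hU.2.1.comp (hσ.prodMap hσ), fun _ _ => hU.2.2 _ _⟩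

end Graphon

/-- Binary cross entropy in bits: the expected length of a code for a Bernoulli `w` bit that is
optimal for a Bernoulli `m` bit. -/
def crossEnt (w m : ℝ) : ℝ := -(w * Real.logb 2 m) - (1 - w) * Real.logb 2 (1 - m)

lemma crossEnt_self (w : ℝ) : crossEnt w w = binEnt w := by
  rw [crossEnt, binEnt, neg_mul]

lemma crossEnt_sub_crossEnt (v w m : ℝ) :
    crossEnt v m - crossEnt w m = (Real.logb 2 (1 - m) - Real.logb 2 m) * (v - w) := by
  unfold crossEnt; ring

lemma continuous_crossEnt_left (m : ℝ) : Continuous fun w => crossEnt w m := by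
  unfold crossEnt; fun_prop

lemma binEnt_eq_binEntropy_div (x : ℝ) : binEnt x = Real.binEntropy x / Real.log 2 := by
  rw [binEnt, Real.logb, Real.logb, Real.binEntropy_eq_negMulLog_add_negMulLog_one_sub,
    Real.negMulLog, Real.negMulLog]
  ring

lemma continuous_binEnt : Continuous binEnt := by
  simpa only [funext binEnt_eq_binEntropy_div] using
    Real.binEntropy_continuous.div_const (Real.log 2)

lemma concaveOn_binEnt : ConcaveOn ℝ (Icc 0 1) binEnt := by
  have h := Real.strictConcave_binEntropy.concaveOn.smul
    (inv_nonneg.2 (Real.log_nonneg one_le_two))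
  refine h.congr fun x _ => ?_
  simp only [smul_eq_mul, binEnt_eq_binEntropy_div, inv_mul_eq_div]

lemma binEnt_mem_Icc {x : ℝ} (hx : x ∈ Icc (0 : ℝ) 1) : binEnt x ∈ Icc (0 : ℝ) 1 := by
  have hlog : 0 < Real.log 2 := Real.log_pos one_lt_two
  rw [binEnt_eq_binEntropy_div]
  exact ⟨div_nonneg (Real.binEntropy_nonneg hx.1 hx.2) hlog.le,
    (div_le_one hlog).2 Real.binEntropy_le_log_two⟩

lemma mul_log_le_mul_log_add {w m : ℝ} (hw : 0 ≤ w) (hm : 0 < m) :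
    w * Real.log m ≤ w * Real.log w + (m - w) := by
  rcases hw.eq_or_lt with rfl | hw
  · simp [hm.le]
  calc w * Real.log m = w * Real.log w + w * Real.log (m / w) := by
        rw [Real.log_div hm.ne' hw.ne']; ring
    _ ≤ w * Real.log w + w * (m / w - 1) := by
        gcongr; exact Real.log_le_sub_one_of_pos (div_pos hm hw)
    _ = w * Real.log w + (m - w) := by field_simp

lemma binEnt_le_crossEnt {w m : ℝ} (hw : w ∈ Icc (0 : ℝ) 1) (hm : m ∈ Ioo (0 : ℝ) 1) :
    binEnt w ≤ crossEnt w m := by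
  have hone := mul_log_le_mul_log_add hw.1 hm.1
  have hzero := mul_log_le_mul_log_add (sub_nonneg.2 hw.2) (sub_pos.2 hm.2)
  have hdiff : crossEnt w m - binEnt w = (w * Real.log w + (1 - w) * Real.log (1 - w)
      - w * Real.log m - (1 - w) * Real.log (1 - m)) / Real.log 2 := by
    unfold crossEnt binEnt Real.logb; ring
  have hnonneg : 0 ≤ crossEnt w m - binEnt w :=
    hdiff ▸ div_nonneg (by linarith) (Real.log_nonneg one_le_two)
  linarith

lemma crossEnt_nonneg {w m : ℝ} (hw : w ∈ Icc (0 : ℝ) 1) (hm : m ∈ Ioo (0 : ℝ) 1) :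
    0 ≤ crossEnt w m :=
  (binEnt_mem_Icc hw).1.trans (binEnt_le_crossEnt hw hm)

/-- Continuity holds even at `w = 0` and `w = 1`: the singular logarithm has coefficient `0`. -/
lemma continuousAt_crossEnt (w : ℝ) : ContinuousAt (crossEnt w) w := by
  have hmul : ∀ a : ℝ, ContinuousAt (fun m => a * Real.logb 2 m) a := fun a => by
    rcases eq_or_ne a 0 with rfl | ha
    · simpa only [zero_mul] using continuousAt_const
    · exact continuousAt_const.mul (Real.continuousAt_logb ha)
  have hsub : ContinuousAt (fun m => (1 - w) * Real.logb 2 (1 - m)) w :=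
    ContinuousAt.comp (f := fun m : ℝ => 1 - m) (g := fun m => (1 - w) * Real.logb 2 m)
      (hmul (1 - w)) (by fun_prop)
  exact (hmul w).neg.sub hsub

lemma exists_rat_crossEnt_le {w : ℝ} (hw : w ∈ Icc (0 : ℝ) 1) {ε : ℝ} (hε : 0 < ε) :
    ∃ q : ℚ, (q : ℝ) ∈ Ioo (0 : ℝ) 1 ∧ crossEnt w q ≤ binEnt w + ε := by
  have hnear : {m | crossEnt w m < binEnt w + ε} ∈ nhds w :=
    (continuousAt_crossEnt w).eventually_lt_const (by rw [crossEnt_self]; linarith)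
  obtain ⟨V, hV, hVopen, hwV⟩ := mem_nhds_iff.1 hnear
  have hwcl : w ∈ closure (Ioo (0 : ℝ) 1) := by rwa [closure_Ioo zero_ne_one]
  obtain ⟨q, hqV, hq⟩ := Rat.denseRange_cast.exists_mem_open (hVopen.inter isOpen_Ioo)
    (mem_closure_iff.1 hwcl V hVopen hwV)
  exact ⟨q, hq, (hV hqV).le⟩

lemma exists_binEnt_le_add_mul_abs {ε : ℝ} (hε : 0 < ε) : ∃ C : ℝ, 0 ≤ C ∧
    ∀ a ∈ Icc (0 : ℝ) 1, ∀ b ∈ Icc (0 : ℝ) 1, binEnt a ≤ binEnt b + ε + C * |a - b| := by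
  obtain ⟨d, hd, h⟩ := Metric.uniformContinuousOn_iff.1
    (isCompact_Icc.uniformContinuousOn_of_continuous
      (continuous_binEnt.continuousOn (s := Icc (0 : ℝ) 1))) ε hε
  refine ⟨1 / d, by positivity, fun a ha b hb => ?_⟩
  rcases lt_or_ge (dist a b) d with hab | hab
  · have hclose : |binEnt a - binEnt b| < ε := h a ha b hb hab
    have : 0 ≤ 1 / d * |a - b| := by positivity
    linarith [(abs_lt.1 hclose).2]
  · have : 1 ≤ 1 / d * |a - b| := by
      rwa [one_div_mul_eq_div, one_le_div hd]
    linarith [(binEnt_mem_Icc ha).2, (binEnt_mem_Icc hb).1]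

section Graphon

variable {U : ℝ → ℝ → ℝ}

lemma graphonEnt_eq_integral_prod (hU : IsGraphon U) :
    graphonEnt U = ∫ p, binEnt (U p.1 p.2) ∂(unitVolume.prod unitVolume) :=
  (integral_prod _ (hU.integrable_comp continuous_binEnt _)).symm

lemma graphonEnt_mem_Icc (hU : IsGraphon U) : graphonEnt U ∈ Icc (0 : ℝ) 1 := by
  have hmem : ∀ p : ℝ × ℝ, binEnt (U p.1 p.2) ∈ Icc (0 : ℝ) 1 :=
    fun p => binEnt_mem_Icc (hU.2.2 p.1 p.2)
  rw [graphonEnt_eq_integral_prod hU]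
  refine ⟨integral_nonneg fun p => (hmem p).1, ?_⟩
  calc ∫ p, binEnt (U p.1 p.2) ∂(unitVolume.prod unitVolume)
      ≤ ∫ _, (1 : ℝ) ∂(unitVolume.prod unitVolume) :=
        integral_mono (hU.integrable_comp continuous_binEnt _) (integrable_const _)
          fun p => (hmem p).2
    _ = 1 := by simp

end Graphon

section BlockCode

variable {κ : Type*} {m : κ → κ → ℝ} {U W : ℝ → ℝ → ℝ} {c δ : ℝ}

/-- Nondegenerate edge probabilities of a stochastic block model: vertices of types `i` and `j`
are joined with probability `m i j`. -/
structure IsBlockModel (m : κ → κ → ℝ) : Prop where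
  symm : ∀ i j, m i j = m j i
  mem_Ioo : ∀ i j, m i j ∈ Ioo (0 : ℝ) 1

variable [Fintype κ]

/-- The expected number of bits per (ordered) pair of points needed to encode `U` with the block
model `m`, where the measures `ν` distribute the points of `[0,1]` over the types. -/
def codeLength (ν : κ → Measure ℝ) (m : κ → κ → ℝ) (U : ℝ → ℝ → ℝ) : ℝ :=
  ∑ i, ∑ j, ∫ p, crossEnt (U p.1 p.2) (m i j) ∂((ν i).prod (ν j))

/-- Some fractional partition of `[0,1]` into types gives `U` a code of length at most `c`. -/
def CodeLengthLE (m : κ → κ → ℝ) (U : ℝ → ℝ → ℝ) (c : ℝ) : Prop :=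
  ∃ ν : κ → Measure ℝ, ∑ i, ν i = unitVolume ∧ codeLength ν m U ≤ c

lemma CodeLengthLE.mono {c' : ℝ} (h : CodeLengthLE m U c) (hc : c ≤ c') : CodeLengthLE m U c' :=
  let ⟨ν, hν, hle⟩ := h
  ⟨ν, hν, hle.trans hc⟩

lemma CodeLengthLE.graphonEnt_le (hm : IsBlockModel m) (hU : IsGraphon U)
    (h : CodeLengthLE m U c) : graphonEnt U ≤ c := by
  obtain ⟨ν, hν, hle⟩ := h
  have hfin := isFiniteMeasure_of_sum_eq hν
  refine le_trans ?_ hle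
  rw [graphonEnt_eq_integral_prod hU,
    integral_prod_eq_sum_sum hν hν (hU.integrable_comp continuous_binEnt _)]
  exact Finset.sum_le_sum fun i _ => Finset.sum_le_sum fun j _ =>
    integral_mono (hU.integrable_comp continuous_binEnt _)
      (hU.integrable_comp (continuous_crossEnt_left _) _)
      fun p => binEnt_le_crossEnt (hU.2.2 _ _) (hm.mem_Ioo i j)

lemma codeLength_map (hU : IsGraphon U) {ν : κ → Measure ℝ} [∀ i, IsFiniteMeasure (ν i)]
    {σ : ℝ → ℝ} (hσ : Measurable σ) :
    codeLength (fun i => (ν i).map σ) m U = codeLength ν m fun x y => U (σ x) (σ y) := by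
  refine Finset.sum_congr rfl fun i _ => Finset.sum_congr rfl fun j _ => ?_
  rw [Measure.map_prod_map _ _ hσ hσ, integral_map (hσ.prodMap hσ).aemeasurable
    (hU.integrable_comp (continuous_crossEnt_left _) _).aestronglyMeasurable]
  rfl

/-- The sum of the absolute values of the logits of the entries of `m`: the Lipschitz constant of
`codeLength` in the cut norm. -/
def totalLogit (m : κ → κ → ℝ) : ℝ :=
  ∑ i, ∑ j, |Real.logb 2 (1 - m i j) - Real.logb 2 (m i j)|

lemma totalLogit_nonneg (m : κ → κ → ℝ) : 0 ≤ totalLogit m :=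
  Finset.sum_nonneg fun _ _ => Finset.sum_nonneg fun _ _ => abs_nonneg _

lemma codeLength_le_add_cutNorm (hU : IsGraphon U) (hW : IsGraphon W) {ν : κ → Measure ℝ}
    (hν : ∑ i, ν i = unitVolume) :
    codeLength ν m U ≤ codeLength ν m W + totalLogit m * cutNorm fun x y => U x y - W x y := by
  have hfin := isFiniteMeasure_of_sum_eq hν
  have hdiff (μ : Measure (ℝ × ℝ)) [IsFiniteMeasure μ] :
      Integrable (fun p : ℝ × ℝ => U p.1 p.2 - W p.1 p.2) μ :=
    (hU.integrable μ).sub (hW.integrable μ)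
  have hblock (i j : κ) : ∫ p, crossEnt (U p.1 p.2) (m i j) ∂((ν i).prod (ν j)) ≤
      ∫ p, crossEnt (W p.1 p.2) (m i j) ∂((ν i).prod (ν j)) +
        |Real.logb 2 (1 - m i j) - Real.logb 2 (m i j)| * cutNorm fun x y => U x y - W x y := by
    rw [← sub_le_iff_le_add', ← integral_sub (hU.integrable_comp (continuous_crossEnt_left _) _)
      (hW.integrable_comp (continuous_crossEnt_left _) _)]
    simp only [crossEnt_sub_crossEnt, integral_const_mul]
    refine (le_abs_self _).trans ?_
    rw [abs_mul]
    gcongr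
    exact abs_integral_prod_le_cutNorm (D := fun x y => U x y - W x y) (hU.2.1.sub hW.2.1)
      (hdiff _) (le_of_sum_eq hν i) (le_of_sum_eq hν j)
  calc codeLength ν m U ≤ _ :=
        Finset.sum_le_sum fun i _ => Finset.sum_le_sum fun j _ => hblock i j
    _ = _ := by
        simp only [Finset.sum_add_distrib, ← Finset.sum_mul, codeLength, totalLogit]

lemma CodeLengthLE.of_deltaCut_lt (hU : IsGraphon U) (hW : IsGraphon W)
    (hUW : deltaCut U W < δ) (h : CodeLengthLE m W c) :
    CodeLengthLE m U (c + totalLogit m * δ) := by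
  obtain ⟨ν, hν, hle⟩ := h
  obtain ⟨σ, τ, hσ, hτ, hcut⟩ := exists_cutNorm_lt_of_deltaCut_lt hUW
  obtain ⟨ν', hν', hmap⟩ := exists_sum_eq_map_eq hν hτ
  have hfin := isFiniteMeasure_of_sum_eq hν'
  refine ⟨fun i => (ν' i).map σ, ?_, ?_⟩
  · rw [← Measure.map_finset_sum' hσ.measurable.aemeasurable, hν', hσ.map_eq]
  calc codeLength (fun i => (ν' i).map σ) m U
      = codeLength ν' m fun x y => U (σ x) (σ y) := codeLength_map hU hσ.measurable
    _ ≤ (codeLength ν' m fun x y => W (τ x) (τ y)) + totalLogit m * δ :=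
        (codeLength_le_add_cutNorm (hU.comp hσ.measurable) (hW.comp hτ.measurable) hν').trans
          (by gcongr; exact totalLogit_nonneg m)
    _ = codeLength ν m W + totalLogit m * δ := by
        rw [← codeLength_map hW hτ.measurable, funext hmap]
    _ ≤ c + totalLogit m * δ := by gcongr

end BlockCode

section Cell

variable {n : ℕ} {u v : Fin n}

/-- The `u`-th of `n` consecutive half-open intervals of length `1/n` partitioning `(0,1]`. -/
def cell (n : ℕ) (u : Fin n) : Set ℝ := Ioc ((u : ℝ) / n) (((u : ℝ) + 1) / n)

lemma measurableSet_cell (u : Fin n) : MeasurableSet (cell n u) := measurableSet_Ioc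

lemma mem_cell_iff_ceil {x : ℝ} : x ∈ cell n u ↔ ⌈(n : ℝ) * x⌉ = ((u : ℕ) : ℤ) + 1 := by
  have hn : (0 : ℝ) < n := by exact_mod_cast u.pos
  rw [Int.ceil_eq_iff, cell, mem_Ioc, div_lt_iff₀ hn, le_div_iff₀ hn, mul_comm x]
  push_cast
  rw [add_sub_cancel_right]

lemma eq_of_mem_cell {x : ℝ} (hu : x ∈ cell n u) (hv : x ∈ cell n v) : u = v := by
  have := (mem_cell_iff_ceil.1 hu).symm.trans (mem_cell_iff_ceil.1 hv)
  omega

lemma iUnion_cell (hn : n ≠ 0) : ⋃ u, cell n u = Ioc 0 1 := by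
  have hn' : (0 : ℝ) < n := by exact_mod_cast Nat.pos_of_ne_zero hn
  ext x
  simp only [mem_iUnion, mem_cell_iff_ceil, mem_Ioc]
  constructor
  · rintro ⟨u, hu⟩
    have hpos : 0 < (n : ℝ) * x := Int.ceil_pos.1 (by omega)
    have hle : (n : ℝ) * x ≤ ((n : ℤ) : ℝ) := Int.ceil_le.1 (by omega)
    push_cast at hle
    exact ⟨(pos_iff_pos_of_mul_pos hpos).1 hn', le_of_mul_le_mul_left (by linarith) hn'⟩
  · rintro ⟨hx0, hx1⟩
    have hpos : 0 < ⌈(n : ℝ) * x⌉ := Int.ceil_pos.2 (mul_pos hn' hx0)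
    have hle : ⌈(n : ℝ) * x⌉ ≤ n :=
      Int.ceil_le.2 (by push_cast; exact mul_le_of_le_one_right hn'.le hx1)
    exact ⟨⟨(⌈(n : ℝ) * x⌉ - 1).toNat, by omega⟩, by simp only; omega⟩

/-- Lebesgue measure on a cell. -/
def cellMeasure (n : ℕ) (u : Fin n) : Measure ℝ := unitVolume.restrict (cell n u)

instance : IsFiniteMeasure (cellMeasure n u) := by unfold cellMeasure; infer_instance

lemma sum_restrict_cell (hn : n ≠ 0) {μ : Measure ℝ} (hμ : μ ≤ unitVolume) :
    ∑ u, μ.restrict (cell n u) = μ := by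
  have hmem : ∀ᵐ x ∂unitVolume, x ∈ Ioc (0 : ℝ) 1 := by
    rw [unitVolume, ← restrict_Ioc_eq_restrict_Icc]
    exact ae_restrict_mem measurableSet_Ioc
  have h := Measure.restrict_iUnion (μ := μ) (s := cell n)
    (fun u v huv => disjoint_left.2 fun x hu hv => huv (eq_of_mem_cell hu hv)) measurableSet_cell
  rw [Measure.sum_fintype, iUnion_cell hn, Measure.restrict_eq_self_of_ae_mem
    ((Measure.absolutelyContinuous_of_le hμ).ae_le hmem)] at h
  exact h.symm

lemma sum_cellMeasure (hn : n ≠ 0) : ∑ u, cellMeasure n u = unitVolume :=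
  sum_restrict_cell hn le_rfl

lemma cellMeasure_real_univ (u : Fin n) : (cellMeasure n u).real univ = (n : ℝ)⁻¹ := by
  have hsub : cell n u ⊆ Icc 0 1 :=
    ((subset_iUnion _ u).trans_eq (iUnion_cell u.pos.ne')).trans Ioc_subset_Icc_self
  rw [cellMeasure, measureReal_restrict_apply_univ, unitVolume,
    measureReal_restrict_apply (measurableSet_cell u), inter_eq_left.2 hsub, cell,
    Real.volume_real_Ioc_of_le (by gcongr; linarith)]
  ring

/-- Lebesgue measure on a product of two cells. -/
abbrev cellSquare (n : ℕ) (u v : Fin n) : Measure (ℝ × ℝ) :=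
  (cellMeasure n u).prod (cellMeasure n v)

lemma cellSquare_real_univ (u v : Fin n) :
    (cellSquare n u v).real univ = ((n : ℝ) ^ 2)⁻¹ := by
  rw [← univ_prod_univ, measureReal_prod_prod, cellMeasure_real_univ, cellMeasure_real_univ, sq,
    mul_inv]

instance : NeZero (cellSquare n u v) := ⟨fun h => by
  have hn : (n : ℝ) ≠ 0 := by exact_mod_cast u.pos.ne'
  have := cellSquare_real_univ u v
  rw [h, measureReal_zero_apply] at this
  exact pow_ne_zero 2 hn (inv_eq_zero.1 this.symm)⟩

lemma ae_cellSquare (u v : Fin n) : ∀ᵐ p ∂cellSquare n u v, p.1 ∈ cell n u ∧ p.2 ∈ cell n v := by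
  rw [cellSquare, cellMeasure, cellMeasure, Measure.prod_restrict]
  exact ae_restrict_mem ((measurableSet_cell u).prod (measurableSet_cell v))

lemma cellSquare_le (hn : n ≠ 0) (u v : Fin n) :
    cellSquare n u v ≤ unitVolume.prod unitVolume :=
  Measure.prod_mono (le_of_sum_eq (sum_cellMeasure hn) u) (le_of_sum_eq (sum_cellMeasure hn) v)

end Cell

lemma mul_div_add_one_le {L ε : ℝ} (hL : 0 ≤ L) (hε : 0 ≤ ε) : L * (ε / (L + 1)) ≤ ε := by
  rw [mul_div_left_comm]
  exact mul_le_of_le_one_right hε ((div_le_one (by positivity)).2 (by linarith))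

section CellAverage

variable {n : ℕ} {W : ℝ → ℝ → ℝ}

/-- The average of `W` over a product of two cells, i.e. the value there of `barStep n W`. -/
def cellAvg (n : ℕ) (W : ℝ → ℝ → ℝ) (u v : Fin n) : ℝ := ⨍ p, W p.1 p.2 ∂cellSquare n u v

lemma integral_cellSquare (W : ℝ → ℝ → ℝ) (u v : Fin n) :
    ∫ p, W p.1 p.2 ∂cellSquare n u v = cellAvg n W u v / n ^ 2 := by
  rw [← measure_smul_average, cellSquare_real_univ, smul_eq_mul, inv_mul_eq_div, cellAvg]

lemma cellAvg_comm (hW : IsGraphon W) (u v : Fin n) : cellAvg n W u v = cellAvg n W v u := by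
  have hswap := integral_prod_swap (μ := cellMeasure n u) (ν := cellMeasure n v)
    fun p => W p.1 p.2
  simp only [Prod.fst_swap, Prod.snd_swap, hW.1] at hswap
  rw [cellAvg, cellAvg, average_eq, average_eq, hswap, cellSquare_real_univ, cellSquare_real_univ]

lemma cellAvg_mem_Icc (hW : IsGraphon W) (u v : Fin n) : cellAvg n W u v ∈ Icc (0 : ℝ) 1 :=
  (convex_Icc 0 1).average_mem isClosed_Icc (Eventually.of_forall fun _ => hW.2.2 _ _)
    (hW.integrable _)

lemma integral_crossEnt_cellSquare (hW : IsGraphon W) (m : ℝ) (u v : Fin n) :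
    ∫ p, crossEnt (W p.1 p.2) m ∂cellSquare n u v = crossEnt (cellAvg n W u v) m / n ^ 2 := by
  have haffine (w : ℝ) : crossEnt w m = (Real.logb 2 (1 - m) - Real.logb 2 m) * w
      + -Real.logb 2 (1 - m) := by unfold crossEnt; ring
  simp only [haffine]
  rw [integral_add ((hW.integrable _).const_mul _) (integrable_const _),
    integral_const_mul, integral_cellSquare, integral_const, cellSquare_real_univ, smul_eq_mul]
  ring

lemma graphonEnt_le_sum_binEnt_cellAvg (hW : IsGraphon W) (hn : n ≠ 0) :
    graphonEnt W ≤ (∑ u, ∑ v, binEnt (cellAvg n W u v)) / n ^ 2 := by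
  rw [graphonEnt_eq_integral_prod hW, integral_prod_eq_sum_sum (sum_cellMeasure hn)
    (sum_cellMeasure hn) (hW.integrable_comp continuous_binEnt _), Finset.sum_div]
  simp only [Finset.sum_div]
  refine Finset.sum_le_sum fun u _ => Finset.sum_le_sum fun v _ => ?_
  rw [integral_cellSquare fun x y => binEnt (W x y)]
  gcongr
  exact concaveOn_binEnt.le_map_average continuous_binEnt.continuousOn isClosed_Icc
    (Eventually.of_forall fun _ => hW.2.2 _ _) (hW.integrable _)
    (hW.integrable_comp continuous_binEnt _)

lemma integral_abs_sub_average_le {α : Type*} [MeasurableSpace α] {μ : Measure α}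
    [IsFiniteMeasure μ] {f : α → ℝ} (hf : Integrable f μ) (c : ℝ) :
    ∫ x, |f x - ⨍ y, f y ∂μ| ∂μ ≤ 2 * ∫ x, |f x - c| ∂μ := by
  have hfc : Integrable (fun x => |f x - c|) μ := (hf.sub (integrable_const c)).abs
  set a : ℝ := ⨍ y, f y ∂μ
  have hca : μ.real univ * |c - a| ≤ ∫ x, |f x - c| ∂μ := by
    have : ∫ x, (f x - c) ∂μ = μ.real univ * (a - c) := by
      rw [integral_sub hf (integrable_const c), integral_const, ← measure_smul_average μ f,
        smul_eq_mul, smul_eq_mul, mul_sub]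
    rw [abs_sub_comm, ← abs_of_nonneg (measureReal_nonneg (μ := μ) (s := univ)), ← abs_mul, ← this]
    exact abs_integral_le_integral_abs
  calc ∫ x, |f x - a| ∂μ ≤ ∫ x, (|f x - c| + |c - a|) ∂μ :=
        integral_mono (hf.sub (integrable_const a)).abs (hfc.add (integrable_const _))
          fun x => abs_sub_le _ _ _
    _ = ∫ x, |f x - c| ∂μ + μ.real univ * |c - a| := by
        rw [integral_add hfc (integrable_const _), integral_const, smul_eq_mul]
    _ ≤ 2 * ∫ x, |f x - c| ∂μ := by linarith

/-- The `L¹` distance between `W` and its cell averages. -/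
def cellDeviation (n : ℕ) (W : ℝ → ℝ → ℝ) : ℝ :=
  ∑ u, ∑ v, ∫ p, |W p.1 p.2 - cellAvg n W u v| ∂cellSquare n u v

lemma cellDeviation_le_of_step (hW : IsGraphon W) (hn : n ≠ 0) {g : ℝ × ℝ → ℝ}
    (hg : Integrable g (unitVolume.prod unitVolume)) {s : Fin n → Fin n → ℝ} {η : ℝ}
    (hs : ∀ u v, ∀ p ∈ cell n u ×ˢ cell n v, |g p - s u v| ≤ η) :
    cellDeviation n W ≤
      2 * (∫ p, |W p.1 p.2 - g p| ∂(unitVolume.prod unitVolume) + η) := by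
  have habs : Integrable (fun p => |W p.1 p.2 - g p|) (unitVolume.prod unitVolume) :=
    ((hW.integrable _).sub hg).abs
  have hdom : Integrable (fun p => |W p.1 p.2 - g p| + η) (unitVolume.prod unitVolume) :=
    habs.add (integrable_const _)
  have htotal : ∫ p, |W p.1 p.2 - g p| ∂(unitVolume.prod unitVolume) + η =
      ∑ u, ∑ v, ∫ p, (|W p.1 p.2 - g p| + η) ∂cellSquare n u v := by
    rw [← integral_prod_eq_sum_sum (sum_cellMeasure hn) (sum_cellMeasure hn) hdom,
      integral_add habs (integrable_const _), integral_const, probReal_univ, one_smul]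
  rw [htotal, cellDeviation, Finset.mul_sum]
  refine Finset.sum_le_sum fun u _ => ?_
  rw [Finset.mul_sum]
  refine Finset.sum_le_sum fun v _ =>
    (integral_abs_sub_average_le (hW.integrable _) (s u v)).trans ?_
  gcongr ?_ * ?_
  refine integral_mono_ae ((hW.integrable _).sub (integrable_const _)).abs
    (hdom.mono_measure (cellSquare_le hn u v)) ?_
  filter_upwards [ae_cellSquare u v] with p hp
  exact (abs_sub_le _ (g p) _).trans (add_le_add_right (hs u v p hp) _)

lemma eventually_cellDeviation_le (hW : IsGraphon W) {ε : ℝ} (hε : 0 < ε) :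
    ∀ᶠ n in atTop, cellDeviation n W ≤ ε := by
  have hreg : (unitVolume.prod unitVolume).Regular := inferInstance
  obtain ⟨g, hgsupp, hgW, hgcont, hgint⟩ := (hW.integrable
    (unitVolume.prod unitVolume)).exists_hasCompactSupport_integral_sub_le (ε := ε / 4)
      (by positivity)
  obtain ⟨d, hd, huc⟩ := Metric.uniformContinuous_iff.1
    (hgsupp.uniformContinuous_of_continuous hgcont) (ε / 4) (by positivity)
  filter_upwards [eventually_ne_atTop 0,
    tendsto_one_div_atTop_nhds_zero_nat.eventually_lt_const hd] with n hn hnd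
  have hdist (u : Fin n) {x : ℝ} (hx : x ∈ cell n u) : dist x (((u : ℝ) + 1) / n) < d := by
    have hend : ((u : ℝ) + 1) / n = (u : ℝ) / n + 1 / n := by ring
    rw [Real.dist_eq, abs_lt]
    constructor <;> linarith [hx.1, hx.2]
  refine (cellDeviation_le_of_step hW hn hgint (η := ε / 4)
    (s := fun u v => g (((u : ℝ) + 1) / n, ((v : ℝ) + 1) / n)) fun u v p hp => ?_).trans ?_
  · exact (huc (max_lt (hdist u hp.1) (hdist v hp.2))).le
  · have : ∫ p, |W p.1 p.2 - g p| ∂(unitVolume.prod unitVolume) ≤ ε / 4 := hgW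
    linarith

lemma sum_binEnt_cellAvg_le (hW : IsGraphon W) (hn : n ≠ 0) {a b : ℝ}
    (hmod : ∀ x ∈ Icc (0 : ℝ) 1, ∀ y ∈ Icc (0 : ℝ) 1, binEnt x ≤ binEnt y + a + b * |x - y|) :
    (∑ u, ∑ v, binEnt (cellAvg n W u v)) / n ^ 2 ≤
      graphonEnt W + a + b * cellDeviation n W := by
  have hent (μ : Measure (ℝ × ℝ)) [IsFiniteMeasure μ] :
      Integrable (fun p : ℝ × ℝ => binEnt (W p.1 p.2) + a) μ :=
    (hW.integrable_comp continuous_binEnt μ).add (integrable_const a)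
  have hcell (u v : Fin n) : binEnt (cellAvg n W u v) / n ^ 2 ≤
      ∫ p, (binEnt (W p.1 p.2) + a) ∂cellSquare n u v +
        b * ∫ p, |W p.1 p.2 - cellAvg n W u v| ∂cellSquare n u v := by
    have hdiff : Integrable (fun p => b * |W p.1 p.2 - cellAvg n W u v|) (cellSquare n u v) :=
      ((hW.integrable _).sub (integrable_const _)).abs.const_mul b
    rw [← inv_mul_eq_div, ← cellSquare_real_univ u v, ← smul_eq_mul, ← integral_const,
      ← integral_const_mul, ← integral_add (hent _) hdiff]
    refine integral_mono (integrable_const _) ((hent _).add hdiff) fun p => ?_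
    simp only [abs_sub_comm (W p.1 p.2)]
    exact hmod _ (cellAvg_mem_Icc hW u v) _ (hW.2.2 _ _)
  calc (∑ u, ∑ v, binEnt (cellAvg n W u v)) / n ^ 2
      ≤ ∫ p, (binEnt (W p.1 p.2) + a) ∂(unitVolume.prod unitVolume) +
          b * cellDeviation n W := by
        rw [integral_prod_eq_sum_sum (sum_cellMeasure hn) (sum_cellMeasure hn) (hent _)]
        simp only [cellDeviation, Finset.sum_div, Finset.mul_sum, ← Finset.sum_add_distrib]
        exact Finset.sum_le_sum fun u _ => Finset.sum_le_sum fun v _ => hcell u v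
    _ = graphonEnt W + a + b * cellDeviation n W := by
        rw [integral_add (hW.integrable_comp continuous_binEnt _) (integrable_const _),
          ← graphonEnt_eq_integral_prod hW, integral_const, probReal_univ, one_smul]

lemma eventually_sum_binEnt_cellAvg_le (hW : IsGraphon W) {ε : ℝ} (hε : 0 < ε) :
    ∀ᶠ n : ℕ in atTop,
      (∑ u : Fin n, ∑ v, binEnt (cellAvg n W u v)) / n ^ 2 ≤ graphonEnt W + ε := by
  obtain ⟨C, hC, hmod⟩ := exists_binEnt_le_add_mul_abs (half_pos hε)
  filter_upwards [eventually_ne_atTop 0,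
    eventually_cellDeviation_le hW (ε := ε / 2 / (C + 1)) (by positivity)] with n hn hdev
  have hCdev : C * cellDeviation n W ≤ ε / 2 :=
    (mul_le_mul_of_nonneg_left hdev hC).trans (mul_div_add_one_le hC (half_pos hε).le)
  linarith [sum_binEnt_cellAvg_le hW hn hmod]

/-- A nondegenerate stochastic block model with rational edge probabilities. The rationality makes
the set of all these models countable. -/
structure RatBlockModel where
  card : ℕ
  ratProb : Fin card → Fin card → ℚ
  isBlockModel : IsBlockModel fun i j => (ratProb i j : ℝ)

/-- The edge probabilities of a rational block model, as real numbers. -/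
def RatBlockModel.prob (m : RatBlockModel) (i j : Fin m.card) : ℝ := m.ratProb i j

instance : Countable RatBlockModel :=
  Function.Injective.countable
    (f := fun m => (⟨m.card, m.ratProb⟩ : Σ k : ℕ, Fin k → Fin k → ℚ)) <| by
      rintro ⟨k, q, hq⟩ ⟨k', q', hq'⟩ h
      cases h
      rfl

lemma exists_codeLengthLE_graphonEnt_add (hW : IsGraphon W) {ε : ℝ} (hε : 0 < ε) :
    ∃ m : RatBlockModel, CodeLengthLE m.prob W (graphonEnt W + ε) := by
  choose! q hq hqent using fun w (hw : w ∈ Icc (0 : ℝ) 1) =>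
    exists_rat_crossEnt_le hw (half_pos hε)
  obtain ⟨n, hn, hent⟩ := ((eventually_ne_atTop 0).and
    (eventually_sum_binEnt_cellAvg_le hW (half_pos hε))).exists
  have hn' : (n : ℝ) ≠ 0 := by exact_mod_cast hn
  refine ⟨⟨n, fun u v => q (cellAvg n W u v), fun u v => by simp only [cellAvg_comm hW u v],
    fun u v => hq _ (cellAvg_mem_Icc hW u v)⟩, cellMeasure n, sum_cellMeasure hn, ?_⟩
  calc codeLength (cellMeasure n) (fun u v => (q (cellAvg n W u v) : ℝ)) W
      = (∑ u, ∑ v, crossEnt (cellAvg n W u v) (q (cellAvg n W u v))) / n ^ 2 := by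
        simp only [codeLength, integral_crossEnt_cellSquare hW, Finset.sum_div]
    _ ≤ (∑ u, ∑ v, (binEnt (cellAvg n W u v) + ε / 2)) / n ^ 2 := by
        gcongr with u _ v _; exact hqent _ (cellAvg_mem_Icc hW u v)
    _ = (∑ u, ∑ v, binEnt (cellAvg n W u v)) / n ^ 2 + ε / 2 := by
        simp only [Finset.sum_add_distrib, Finset.sum_const, Finset.card_univ, Fintype.card_fin,
          nsmul_eq_mul]
        field_simp
    _ ≤ graphonEnt W + ε := by linarith

end CellAverage

lemma exists_finset_forall_exists {ι α : Type*} [Countable ι] {P : ι → α → Prop} {A : Set α}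
    (h : ∀ f : ℕ → α, (∀ k, f k ∈ A) → ∃ i, ∃ᶠ k in atTop, P i (f k)) :
    ∃ s : Finset ι, ∀ a ∈ A, ∃ i ∈ s, P i a := by
  have := Encodable.ofCountable ι
  by_contra! hcon
  choose f hfA hf using fun N : ℕ =>
    hcon ((Finset.range N).preimage Encodable.encode Encodable.encode_injective.injOn)
  obtain ⟨i, hi⟩ := h f hfA
  obtain ⟨N, hN, hP⟩ := frequently_atTop.1 hi (Encodable.encode i + 1)
  exact hf N i (by simpa using hN) hP

lemma exists_nonneg_forall_mem_le {α : Type*} (s : Finset α) (f : α → ℝ) :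
    ∃ L : ℝ, 0 ≤ L ∧ ∀ a ∈ s, f a ≤ L :=
  ⟨∑ a ∈ s, |f a|, Finset.sum_nonneg fun _ _ => abs_nonneg _, fun _ ha =>
    (le_abs_self _).trans (Finset.single_le_sum (f := fun a => |f a|) (fun _ _ => abs_nonneg _) ha)⟩

section CutCompact

variable {A : Set (ℝ → ℝ → ℝ)} {U W : ℝ → ℝ → ℝ} {ε : ℝ}

lemma exists_codeLengthLE_of_deltaCut_lt (hW : IsGraphon W) (hε : 0 < ε) :
    ∃ m : RatBlockModel, ∃ δ > 0, ∀ U, IsGraphon U → deltaCut U W < δ →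
      CodeLengthLE m.prob U (graphonEnt W + ε) := by
  obtain ⟨m, hcode⟩ := exists_codeLengthLE_graphonEnt_add hW (half_pos hε)
  have hL := totalLogit_nonneg m.prob
  refine ⟨m, ε / 2 / (totalLogit m.prob + 1), by positivity,
    fun U hU hUW => (CodeLengthLE.of_deltaCut_lt hU hW hUW hcode).mono ?_⟩
  linarith [mul_div_add_one_le hL (half_pos hε).le]

lemma exists_graphonEnt_le_of_deltaCut_lt (hW : IsGraphon W) (hε : 0 < ε) :
    ∃ δ > 0, ∀ U, IsGraphon U → deltaCut U W < δ → graphonEnt U ≤ graphonEnt W + ε :=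
  let ⟨m, δ, hδ, hcode⟩ := exists_codeLengthLE_of_deltaCut_lt hW hε
  ⟨δ, hδ, fun U hU hUW => (hcode U hU hUW).graphonEnt_le m.isBlockModel hU⟩

lemma bddAbove_graphonEnt (hA : ∀ W ∈ A, IsGraphon W) : BddAbove (graphonEnt '' A) :=
  ⟨1, by rintro _ ⟨W, hW, rfl⟩; exact (graphonEnt_mem_Icc (hA W hW)).2⟩

lemma CutCompact.exists_graphonEnt_eq_sSup (hcomp : CutCompact A)
    (hA : ∀ W ∈ A, IsGraphon W) (hne : A.Nonempty) :
    ∃ W ∈ A, graphonEnt W = sSup (graphonEnt '' A) := by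
  obtain ⟨e, -, he, hmem⟩ := exists_seq_tendsto_sSup (hne.image graphonEnt)
    (bddAbove_graphonEnt hA)
  choose f hfA hfe using hmem
  obtain ⟨W, hWA, φ, hφ, hlim⟩ := hcomp f hfA
  refine ⟨W, hWA, le_antisymm (le_csSup (bddAbove_graphonEnt hA) (mem_image_of_mem _ hWA)) ?_⟩
  refine le_of_forall_pos_le_add fun ε hε => ?_
  obtain ⟨δ, hδ, husc⟩ := exists_graphonEnt_le_of_deltaCut_lt (hA W hWA) hε
  refine le_of_tendsto (he.comp hφ.tendsto_atTop) ?_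
  filter_upwards [hlim.eventually_lt_const hδ] with k hk
  rw [Function.comp_apply, ← hfe]
  exact husc _ (hA _ (hfA _)) hk

lemma CutCompact.exists_finset_codeLengthLE (hcomp : CutCompact A)
    (hA : ∀ W ∈ A, IsGraphon W) (hε : 0 < ε) :
    ∃ s : Finset RatBlockModel, ∀ W ∈ A, ∃ m ∈ s,
      CodeLengthLE m.prob W (sSup (graphonEnt '' A) + ε) := by
  refine exists_finset_forall_exists fun f hf => ?_
  obtain ⟨W, hWA, φ, hφ, hlim⟩ := hcomp f hf
  obtain ⟨m, δ, hδ, hcode⟩ := exists_codeLengthLE_of_deltaCut_lt (hA W hWA) hε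
  refine ⟨m, hφ.tendsto_atTop.frequently (Eventually.frequently ?_)⟩
  filter_upwards [hlim.eventually_lt_const hδ] with j hj
  refine (hcode _ (hA _ (hf _)) hj).mono ?_
  gcongr
  exact le_csSup (bddAbove_graphonEnt hA) (mem_image_of_mem _ hWA)

lemma CutCompact.exists_finset_codeLengthLE_of_deltaCut_lt (hcomp : CutCompact A)
    (hA : ∀ W ∈ A, IsGraphon W) (hε : 0 < ε) :
    ∃ s : Finset RatBlockModel, ∃ δ > 0, ∀ U, IsGraphon U → (∃ W ∈ A, deltaCut U W < δ) →
      ∃ m ∈ s, CodeLengthLE m.prob U (sSup (graphonEnt '' A) + ε) := by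
  obtain ⟨s, hs⟩ := hcomp.exists_finset_codeLengthLE hA (half_pos hε)
  obtain ⟨L, hL, hsL⟩ := exists_nonneg_forall_mem_le s fun m => totalLogit m.prob
  refine ⟨s, ε / 2 / (L + 1), by positivity, ?_⟩
  rintro U hU ⟨W, hWA, hUW⟩
  obtain ⟨m, hms, hcode⟩ := hs W hWA
  refine ⟨m, hms, (CodeLengthLE.of_deltaCut_lt hU (hA W hWA) hUW hcode).mono ?_⟩
  have : totalLogit m.prob * (ε / 2 / (L + 1)) ≤ ε / 2 :=
    (mul_le_mul_of_nonneg_right (hsL m hms) (by positivity)).trans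
      (mul_div_add_one_le hL (half_pos hε).le)
  linarith

end CutCompact

section Graph

variable {n : ℕ}

/-- The unordered pairs of distinct vertices, i.e. the possible edges, encoded as pairs `u < v`. -/
abbrev VertexPair (n : ℕ) := {p : Fin n × Fin n // p.1 < p.2}

lemma sum_sum_eq_sum_diag_add_two_mul_sum {c : Fin n → Fin n → ℝ} (hc : ∀ u v, c u v = c v u) :
    ∑ u, ∑ v, c u v = ∑ u, c u u + 2 * ∑ e : VertexPair n, c e.1.1 e.1.2 := by
  have hlt : ∑ e : VertexPair n, c e.1.1 e.1.2 = ∑ u, ∑ v, if u < v then c u v else 0 := by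
    rw [← Fintype.sum_prod_type', ← Finset.sum_filter]
    exact (Finset.sum_subtype _ (by simp) fun p : Fin n × Fin n => c p.1 p.2).symm
  have hgt : ∑ e : VertexPair n, c e.1.1 e.1.2 = ∑ u, ∑ v, if v < u then c u v else 0 := by
    rw [hlt, Finset.sum_comm]
    simp only [hc]
  have hdiag : ∑ u, c u u = ∑ u, ∑ v, if u = v then c u v else 0 := by simp
  rw [two_mul]
  nth_rw 1 [hlt]
  rw [hgt, hdiag]
  simp only [← Finset.sum_add_distrib]
  refine Finset.sum_congr rfl fun u _ => Finset.sum_congr rfl fun v _ => ?_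
  rcases lt_trichotomy u v with h | h | h
  · simp [h, h.ne, h.not_gt]
  · simp [h]
  · simp [h, h.ne', h.not_gt]

lemma choose2_pos (hn : 2 ≤ n) : 0 < choose2 n := by
  have : (2 : ℝ) ≤ n := by exact_mod_cast hn
  rw [choose2]
  nlinarith

lemma card_vertexPair (n : ℕ) : (Fintype.card (VertexPair n) : ℝ) = choose2 n := by
  have := sum_sum_eq_sum_diag_add_two_mul_sum (n := n) (c := fun _ _ => 1) fun _ _ => rfl
  simp only [Finset.sum_const, Finset.card_univ, Fintype.card_fin, nsmul_eq_mul, mul_one] at this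
  rw [choose2, eq_div_iff two_ne_zero]
  linarith

open Classical in
/-- A graph as the indicator function of its edge set. -/
def graphEquiv (n : ℕ) : SimpleGraph (Fin n) ≃ (VertexPair n → Bool) where
  toFun G e := decide (G.Adj e.1.1 e.1.2)
  invFun b := SimpleGraph.fromRel fun u v => ∃ h : u < v, b ⟨(u, v), h⟩ = true
  left_inv G := by
    ext u v
    simp only [SimpleGraph.fromRel_adj, decide_eq_true_eq, exists_prop, G.adj_comm v u]
    exact ⟨fun h => h.2.elim And.right And.right,
      fun h => ⟨h.ne, h.ne.lt_or_gt.imp (⟨·, h⟩) (⟨·, h⟩)⟩⟩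
  right_inv b := by
    ext ⟨⟨u, v⟩, h : u < v⟩
    simp [h, h.ne, h.not_gt]

open Classical in
/-- The adjacency matrix of a graph, with real entries. -/
def realAdj (G : SimpleGraph (Fin n)) (u v : Fin n) : ℝ := if G.Adj u v then 1 else 0

lemma realAdj_comm (G : SimpleGraph (Fin n)) (u v : Fin n) : realAdj G u v = realAdj G v u := by
  classical
  simp only [realAdj, G.adj_comm u v]

lemma realAdj_mem_Icc (G : SimpleGraph (Fin n)) (u v : Fin n) : realAdj G u v ∈ Icc (0 : ℝ) 1 := by
  unfold realAdj
  split_ifs <;> simp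

lemma realAdj_vertexPair (G : SimpleGraph (Fin n)) (e : VertexPair n) :
    realAdj G e.1.1 e.1.2 = (graphEquiv n G e).toNat := by
  by_cases h : G.Adj e.1.1 e.1.2 <;> simp [realAdj, graphEquiv, h]

lemma graphonOfGraph_eq_realAdj (G : SimpleGraph (Fin n)) {u v : Fin n} {x y : ℝ}
    (hx : x ∈ cell n u) (hy : y ∈ cell n v) : graphonOfGraph G x y = realAdj G u v := by
  classical
  have hadj : (∃ i j, G.Adj i j ∧ x ∈ cell n i ∧ y ∈ cell n j) ↔ G.Adj u v :=
    ⟨fun ⟨_, _, h, hi, hj⟩ => eq_of_mem_cell hi hx ▸ eq_of_mem_cell hj hy ▸ h,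
      fun h => ⟨u, v, h, hx, hy⟩⟩
  simp only [graphonOfGraph, realAdj, ← mem_cell_iff_ceil, hadj]

lemma isGraphon_graphonOfGraph (G : SimpleGraph (Fin n)) : IsGraphon (graphonOfGraph G) := by
  classical
  unfold graphonOfGraph
  simp only [← mem_cell_iff_ceil]
  refine ⟨fun x y => ?_, Measurable.ite ?_ measurable_const measurable_const, fun x y => ?_⟩
  · refine if_congr ?_ rfl rfl
    rw [exists_comm]
    simp only [G.adj_comm, and_comm]
  · simp only [ofPred_exists, ofPred_and]
    exact .iUnion fun u => .iUnion fun v => (MeasurableSet.const _).inter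
      ((measurable_fst (measurableSet_cell u)).inter (measurable_snd (measurableSet_cell v)))
  · dsimp only
    split_ifs <;> simp

end Graph

section BernoulliProduct

open ProbabilityTheory

lemma ncard_mul_le_one {Ω : Type*} [Finite Ω] [MeasurableSpace Ω] [MeasurableSingletonClass Ω]
    {P : Measure Ω} [IsProbabilityMeasure P] {s : Set Ω} {a : ℝ} (h : ∀ x ∈ s, a ≤ P.real {x}) :
    s.ncard * a ≤ 1 := by
  have hs := s.toFinite
  rw [ncard_eq_toFinset_card s hs, ← nsmul_eq_mul]
  calc hs.toFinset.card • a ≤ ∑ x ∈ hs.toFinset, P.real {x} :=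
        Finset.card_nsmul_le_sum _ _ _ fun x hx => h x (hs.mem_toFinset.1 hx)
    _ ≤ 1 := (sum_measureReal_singleton _).trans_le measureReal_le_one

lemma rpow_neg_crossEnt_toNat (b : Bool) {q : unitInterval} (hq : (q : ℝ) ∈ Ioo (0 : ℝ) 1) :
    (2 : ℝ) ^ (-crossEnt b.toNat q) = (bernoulliMeasure true false q).real {b} := by
  rw [bernoulliMeasure_real_apply q (measurableSet_singleton b)]
  cases b
  · simpa [crossEnt] using Real.rpow_logb two_pos (by norm_num) (sub_pos.2 hq.2)
  · simpa [crossEnt] using Real.rpow_logb two_pos (by norm_num) hq.1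

variable {E : Type*} [Fintype E]

/-- The law of a vector of independent bits, the `e`-th of which is `true` with probability
`p e`. -/
def bernoulliPi (p : E → unitInterval) : Measure (E → Bool) :=
  Measure.pi fun e => bernoulliMeasure true false (p e)

instance (p : E → unitInterval) : IsProbabilityMeasure (bernoulliPi p) := by
  unfold bernoulliPi; infer_instance

lemma bernoulliPi_real_singleton {q : E → unitInterval} (hq : ∀ e, (q e : ℝ) ∈ Ioo (0 : ℝ) 1)
    (b : E → Bool) :
    (bernoulliPi q).real {b} = (2 : ℝ) ^ (-∑ e, crossEnt (b e).toNat (q e)) := by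
  rw [bernoulliPi, measureReal_def, Measure.pi_singleton, ENNReal.toReal_prod,
    ← Finset.sum_neg_distrib, Real.rpow_sum_of_pos two_pos]
  exact Finset.prod_congr rfl fun e _ => (rpow_neg_crossEnt_toNat (b e) (hq e)).symm

lemma ncard_sum_crossEnt_le {q : E → ℝ} (hq : ∀ e, q e ∈ Ioo (0 : ℝ) 1) (K : ℝ) :
    ({b : E → Bool | ∑ e, crossEnt (b e).toNat (q e) ≤ K}.ncard : ℝ) ≤ 2 ^ K := by
  have h := ncard_mul_le_one (P := bernoulliPi fun e => ⟨q e, Ioo_subset_Icc_self (hq e)⟩)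
    (s := {b : E → Bool | ∑ e, crossEnt (b e).toNat (q e) ≤ K}) (a := 2 ^ (-K)) fun b hb => by
      rw [bernoulliPi_real_singleton hq]
      exact Real.rpow_le_rpow_of_exponent_le one_le_two (neg_le_neg hb)
  rwa [Real.rpow_neg zero_le_two, ← div_eq_mul_inv, div_le_one (by positivity)] at h

end BernoulliProduct

section RandomAssignment

open ProbabilityTheory

variable {V X E : Type*} [Fintype E] {s t : E → V}

lemma measurePreserving_eval_prod [Fintype V] [MeasurableSpace X] (P : V → Measure X)
    [∀ v, IsProbabilityMeasure (P v)] {u v : V} (huv : u ≠ v) :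
    MeasurePreserving (fun ω : V → X => (ω u, ω v)) (Measure.pi P) ((P u).prod (P v)) := by
  refine ⟨(measurable_pi_apply u).prodMk (measurable_pi_apply v), ?_⟩
  have hind : iIndepFun (fun v (ω : V → X) => ω v) (Measure.pi P) :=
    iIndepFun_pi (X := fun _ x => x) fun _ => aemeasurable_id
  rw [(indepFun_iff_map_prod_eq_prod_map_map (measurable_pi_apply u).aemeasurable
    (measurable_pi_apply v).aemeasurable).1 (hind.indepFun huv)]
  exact congrArg₂ _ (measurePreserving_eval P u).map_eq (measurePreserving_eval P v).map_eq

lemma exists_sum_le_sum_integral_prod [Finite V] [MeasurableSpace X]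
    (P : V → Measure X) [∀ v, IsProbabilityMeasure (P v)] (hst : ∀ e, s e ≠ t e) {C : E → X × X → ℝ}
    (hC : ∀ e, Integrable (C e) ((P (s e)).prod (P (t e)))) :
    ∃ ω : V → X, ∑ e, C e (ω (s e), ω (t e)) ≤ ∑ e, ∫ p, C e p ∂((P (s e)).prod (P (t e))) := by
  have := Fintype.ofFinite V
  have hmp e := measurePreserving_eval_prod P (hst e)
  have hint e : Integrable (fun ω => C e (ω (s e), ω (t e))) (Measure.pi P) :=
    (hmp e).integrable_comp_of_integrable (hC e)
  obtain ⟨ω, hω⟩ := exists_le_integral (integrable_finsetSum Finset.univ fun e _ => hint e)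
  refine ⟨ω, hω.trans_eq ?_⟩
  rw [integral_finsetSum _ fun e _ => hint e]
  refine Finset.sum_congr rfl fun e _ => ?_
  rw [← (hmp e).map_eq, integral_map (hmp e).aemeasurable
    ((hmp e).map_eq ▸ (hC e).aestronglyMeasurable)]

lemma exists_sum_le_sum_mul_mul [Finite V] [Fintype X] {w : V → X → ENNReal}
    (hw : ∀ v, ∑ i, w v i = 1) (hst : ∀ e, s e ≠ t e) (C : E → X → X → ℝ) :
    ∃ ω : V → X, ∑ e, C e (ω (s e)) (ω (t e)) ≤
      ∑ e, ∑ i, ∑ j, (w (s e) i).toReal * (w (t e) j).toReal * C e i j := by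
  let : MeasurableSpace X := ⊤
  have hP v i : (PMF.ofFintype (w v) (hw v)).toMeasure.real {i} = (w v i).toReal := by
    rw [measureReal_def, PMF.toMeasure_apply_singleton _ _ (measurableSet_singleton i),
      PMF.ofFintype_apply]
  obtain ⟨ω, hω⟩ := exists_sum_le_sum_integral_prod
    (fun v => (PMF.ofFintype (w v) (hw v)).toMeasure) hst (C := fun e p => C e p.1 p.2)
    fun _ => .of_finite
  refine ⟨ω, hω.trans_eq (Finset.sum_congr rfl fun e _ => ?_)⟩
  simp only [integral_fintype .of_finite, Fintype.sum_prod_type, ← singleton_prod_singleton,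
    measureReal_prod_prod, hP, smul_eq_mul]

end RandomAssignment

section GraphCount

variable {n : ℕ} {G : SimpleGraph (Fin n)}

lemma integral_graphonOfGraph (G : SimpleGraph (Fin n)) (hn : n ≠ 0) {μ ν : Measure ℝ}
    (hμ : μ ≤ unitVolume) (hν : ν ≤ unitVolume) {f : ℝ → ℝ} (hf : Continuous f) :
    ∫ p, f (graphonOfGraph G p.1 p.2) ∂(μ.prod ν) =
      ∑ u, ∑ v, μ.real (cell n u) * ν.real (cell n v) * f (realAdj G u v) := by
  have := isFiniteMeasure_of_le _ hμ
  have := isFiniteMeasure_of_le _ hν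
  rw [integral_prod_eq_sum_sum (sum_restrict_cell hn hμ) (sum_restrict_cell hn hν)
    ((isGraphon_graphonOfGraph G).integrable_comp hf _)]
  refine Finset.sum_congr rfl fun u _ => Finset.sum_congr rfl fun v _ => ?_
  have hG : ∀ p ∈ cell n u ×ˢ cell n v, f (graphonOfGraph G p.1 p.2) = f (realAdj G u v) :=
    fun p hp => by rw [graphonOfGraph_eq_realAdj G hp.1 hp.2]
  rw [Measure.prod_restrict, setIntegral_congr_fun
    ((measurableSet_cell u).prod (measurableSet_cell v)) hG, setIntegral_const,
    measureReal_prod_prod, smul_eq_mul]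

variable {κ : Type*} [Fintype κ] {m : κ → κ → ℝ} {c : ℝ}

lemma sum_nat_mul_measure_cell {ν : κ → Measure ℝ} (hν : ∑ i, ν i = unitVolume) (u : Fin n) :
    ∑ i, (n : ENNReal) * ν i (cell n u) = 1 := by
  have hn : (n : ENNReal) ≠ 0 := by exact_mod_cast u.pos.ne'
  have h := cellMeasure_real_univ u
  rw [cellMeasure, measureReal_restrict_apply_univ, measureReal_def,
    ← ENNReal.toReal_natCast, ← ENNReal.toReal_inv, ENNReal.toReal_eq_toReal_iff'
      (measure_ne_top _ _) (ENNReal.inv_ne_top.2 hn)] at h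
  rw [← Finset.mul_sum, ← Measure.finsetSum_apply, hν, h,
    ENNReal.mul_inv_cancel hn (ENNReal.natCast_ne_top n)]

lemma codeLength_graphonOfGraph (G : SimpleGraph (Fin n)) (hn : n ≠ 0) {ν : κ → Measure ℝ}
    (hν : ∑ i, ν i = unitVolume) :
    n ^ 2 * codeLength ν m (graphonOfGraph G) = ∑ u, ∑ v, ∑ i, ∑ j,
      ((n : ENNReal) * ν i (cell n u)).toReal * ((n : ENNReal) * ν j (cell n v)).toReal *
        crossEnt (realAdj G u v) (m i j) := by
  have hcell i j := integral_graphonOfGraph G hn (le_of_sum_eq hν i) (le_of_sum_eq hν j)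
    (continuous_crossEnt_left (m i j))
  simp only [codeLength, hcell, Finset.mul_sum]
  simp only [Finset.sum_comm (s := (Finset.univ : Finset κ)) (t := (Finset.univ : Finset (Fin n))),
    ENNReal.toReal_mul, ENNReal.toReal_natCast, measureReal_def]
  refine Finset.sum_congr rfl fun u _ => Finset.sum_congr rfl fun v _ =>
    Finset.sum_congr rfl fun i _ => Finset.sum_congr rfl fun j _ => ?_
  ring

lemma CodeLengthLE.exists_assignment (hm : IsBlockModel m)
    (h : CodeLengthLE m (graphonOfGraph G) c) :
    ∃ π : Fin n → κ, ∑ e : VertexPair n,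
      crossEnt (realAdj G e.1.1 e.1.2) (m (π e.1.1) (π e.1.2)) ≤ n ^ 2 * c / 2 := by
  obtain ⟨ν, hν, hle⟩ := h
  rcases eq_or_ne n 0 with rfl | hn
  · exact ⟨Fin.elim0, by simp⟩
  set w : Fin n → κ → ENNReal := fun u i => n * ν i (cell n u)
  obtain ⟨π, hπ⟩ := exists_sum_le_sum_mul_mul (w := w) (sum_nat_mul_measure_cell hν)
    (s := fun e : VertexPair n => e.1.1) (t := fun e => e.1.2) (fun e => e.2.ne)
    fun e i j => crossEnt (realAdj G e.1.1 e.1.2) (m i j)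
  refine ⟨π, hπ.trans ?_⟩
  set d : Fin n → Fin n → ℝ := fun u v => ∑ i, ∑ j, (w u i).toReal * (w v j).toReal *
    crossEnt (realAdj G u v) (m i j)
  have hsymm u v : d u v = d v u := by
    refine Finset.sum_comm.trans ?_
    simp only [d, realAdj_comm G u v, hm.symm, mul_comm (w u _).toReal]
  have hdiag : 0 ≤ ∑ u, d u u := Finset.sum_nonneg fun u _ => Finset.sum_nonneg fun i _ =>
    Finset.sum_nonneg fun j _ => mul_nonneg (by positivity)
      (crossEnt_nonneg (realAdj_mem_Icc G u u) (hm.mem_Ioo i j))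
  have htotal : ∑ u, ∑ v, d u v ≤ n ^ 2 * c := by
    rw [← codeLength_graphonOfGraph G hn hν]
    gcongr
  rw [sum_sum_eq_sum_diag_add_two_mul_sum hsymm] at htotal
  linarith

lemma ncard_codeLengthLE_le (hm : IsBlockModel m) (n : ℕ) (c : ℝ) :
    ({G : SimpleGraph (Fin n) | CodeLengthLE m (graphonOfGraph G) c}.ncard : ℝ) ≤
      Fintype.card κ ^ n * 2 ^ (n ^ 2 * c / 2) := by
  classical
  let B (π : Fin n → κ) : Set (VertexPair n → Bool) :=
    {b | ∑ e, crossEnt (b e).toNat (m (π e.1.1) (π e.1.2)) ≤ n ^ 2 * c / 2}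
  have hsub : {G : SimpleGraph (Fin n) | CodeLengthLE m (graphonOfGraph G) c}.ncard ≤
      (⋃ π, B π).ncard := by
    refine ncard_le_ncard_of_injOn (graphEquiv n) (fun G hG => mem_iUnion.2 ?_)
      (graphEquiv n).injective.injOn
    obtain ⟨π, hπ⟩ := CodeLengthLE.exists_assignment hm hG
    exact ⟨π, by simpa only [B, mem_ofPred_eq, realAdj_vertexPair] using hπ⟩
  calc ({G : SimpleGraph (Fin n) | CodeLengthLE m (graphonOfGraph G) c}.ncard : ℝ)
      ≤ ∑ π, ((B π).ncard : ℝ) := by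
        exact_mod_cast hsub.trans (ncard_iUnion_le_of_fintype B)
    _ ≤ ∑ _π : Fin n → κ, 2 ^ (n ^ 2 * c / 2) := Finset.sum_le_sum fun π _ =>
        ncard_sum_crossEnt_le (fun _ => hm.mem_Ioo _ _) _
    _ = Fintype.card κ ^ n * 2 ^ (n ^ 2 * c / 2) := by simp

end GraphCount

section Entropy

variable {Ω : Type*} [MeasurableSpace Ω] [MeasurableSingletonClass Ω]

/-- The Shannon entropy, in bits, of a probability measure on a finite space. -/
def shannonEnt (P : Measure Ω) : ℝ := ∫ x, -Real.logb 2 (P.real {x}) ∂P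

lemma shannonEnt_pi {E : Type*} [Fintype E] {X : E → Type*} [∀ e, Finite (X e)]
    [∀ e, MeasurableSpace (X e)] [∀ e, MeasurableSingletonClass (X e)] (P : ∀ e, Measure (X e))
    [∀ e, IsProbabilityMeasure (P e)] :
    shannonEnt (Measure.pi P) = ∑ e, shannonEnt (P e) := by
  have hlog : ∀ᵐ ω ∂Measure.pi P, -Real.logb 2 ((Measure.pi P).real {ω}) =
      ∑ e, -Real.logb 2 ((P e).real {ω e}) := by
    refine ae_iff_of_countable.2 fun ω hω => ?_
    rw [Measure.pi_singleton, Finset.prod_ne_zero_iff] at hω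
    rw [measureReal_def, Measure.pi_singleton, ENNReal.toReal_prod, Real.logb_prod,
      Finset.sum_neg_distrib]
    · rfl
    · exact fun e he => ENNReal.toReal_ne_zero.2 ⟨hω e he, measure_ne_top _ _⟩
  rw [shannonEnt, integral_congr_ae hlog, integral_finsetSum _ fun _ _ => .of_finite]
  exact Finset.sum_congr rfl fun e _ => integral_comp_eval (μ := P) (i := e)
    (f := fun x => -Real.logb 2 ((P e).real {x})) AEStronglyMeasurable.of_discrete

variable [Fintype Ω] (P : Measure Ω) [IsProbabilityMeasure P]

lemma shannonEnt_le_integral_neg_logb {q : Ω → ℝ} (hq : ∀ x, 0 < q x) (hsum : ∑ x, q x ≤ 1) :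
    shannonEnt P ≤ ∫ x, -Real.logb 2 (q x) ∂P := by
  have hterm x := mul_log_le_mul_log_add (measureReal_nonneg (μ := P) (s := {x})) (hq x)
  have htotal := Finset.sum_le_sum fun x (_ : x ∈ Finset.univ) => hterm x
  have hP : ∑ x, P.real {x} = 1 := by simp
  simp only [Finset.sum_add_distrib, Finset.sum_sub_distrib, hP] at htotal
  rw [shannonEnt, integral_fintype .of_finite, integral_fintype .of_finite]
  simp only [Real.logb, smul_eq_mul, mul_neg, Finset.sum_neg_distrib, ← mul_div_assoc,
    ← Finset.sum_div, neg_le_neg_iff]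
  exact div_le_div_of_nonneg_right (by linarith) (Real.log_nonneg one_le_two)

lemma neg_logb_two_le {k y : ℝ} (hk : 0 < k) (h : k⁻¹ / 2 ≤ y) :
    -Real.logb 2 y ≤ 1 + Real.logb 2 k := by
  have := Real.logb_le_logb_of_le one_lt_two (by positivity) h
  rw [Real.logb_div (by positivity) two_ne_zero, Real.logb_inv,
    Real.logb_self_eq_one one_lt_two] at this
  linarith

/-- Gibbs' inequality against the even mixture of the uniform laws on `s` and on `Ω`. -/
lemma shannonEnt_le_one_add (s : Set Ω) :
    shannonEnt P ≤
      1 + Real.logb 2 s.ncard + P.real sᶜ * Real.logb 2 (Fintype.card Ω) := by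
  have : Nonempty Ω := P.nonempty_of_neZero
  have hΩ : (0 : ℝ) < Fintype.card Ω := by exact_mod_cast Fintype.card_pos
  have hlogs : 0 ≤ Real.logb 2 s.ncard :=
    div_nonneg (Real.log_natCast_nonneg _) (Real.log_nonneg one_le_two)
  set q : Ω → ℝ := fun x =>
    (s.indicator (fun _ => (s.ncard : ℝ)⁻¹) x + (Fintype.card Ω : ℝ)⁻¹) / 2
  have hind x : 0 ≤ s.indicator (fun _ => (s.ncard : ℝ)⁻¹) x :=
    indicator_nonneg (fun _ _ => by positivity) x
  have hqpos x : 0 < q x := by have := hind x; positivity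
  have hqsum : ∑ x, q x ≤ 1 := by
    have hs : ∑ x, s.indicator (fun _ => (s.ncard : ℝ)⁻¹) x ≤ 1 := by
      classical
      rw [ncard_eq_toFinset_card', ← filter_mem_univ_eq_toFinset]
      simp only [indicator_apply, ← Finset.sum_filter, Finset.sum_const, nsmul_eq_mul,
        mul_inv_le_one]
    rw [← Finset.sum_div, Finset.sum_add_distrib, Finset.sum_const, Finset.card_univ,
      nsmul_eq_mul, mul_inv_cancel₀ hΩ.ne']
    linarith
  have hqlog x : -Real.logb 2 (q x) ≤
      1 + Real.logb 2 s.ncard + sᶜ.indicator (fun _ => Real.logb 2 (Fintype.card Ω)) x := by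
    by_cases hx : x ∈ s
    · have hs : (0 : ℝ) < s.ncard := by exact_mod_cast (ncard_pos s.toFinite).2 ⟨x, hx⟩
      simpa [hx] using
        neg_logb_two_le (y := q x) hs (by simp only [q, indicator_of_mem hx]; gcongr; simp)
    · have := neg_logb_two_le (y := q x) hΩ (by simp only [q]; gcongr; linarith [hind x])
      simp only [indicator_of_mem (mem_compl hx)]
      linarith
  calc shannonEnt P ≤ ∫ x, -Real.logb 2 (q x) ∂P := shannonEnt_le_integral_neg_logb P hqpos hqsum
    _ ≤ ∫ x, (1 + Real.logb 2 s.ncard +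
          sᶜ.indicator (fun _ => Real.logb 2 (Fintype.card Ω)) x) ∂P :=
        integral_mono .of_finite .of_finite hqlog
    _ = 1 + Real.logb 2 s.ncard + P.real sᶜ * Real.logb 2 (Fintype.card Ω) := by
        rw [integral_add .of_finite .of_finite, integral_const, probReal_univ, one_smul,
          integral_indicator_const _ .of_discrete, smul_eq_mul]

end Entropy

section Concentration

open ProbabilityTheory

variable {E : Type*} [Fintype E] (p : E → unitInterval)

lemma shannonEnt_bernoulliMeasure (p : unitInterval) :
    shannonEnt (bernoulliMeasure true false p) = binEnt p := by
  rw [shannonEnt, integral_bernoulliMeasure]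
  simp only [MeasurableSpace.measurableSet_top, mem_singleton_iff, Bool.false_eq_true,
    not_false_eq_true, bernoulliMeasure_real_apply_of_mem_of_notMem, smul_eq_mul, mul_neg,
    Bool.true_eq_false, bernoulliMeasure_real_apply_of_notMem_of_mem, binEnt, neg_mul]
  ring

lemma shannonEnt_bernoulliPi : shannonEnt (bernoulliPi p) = ∑ e, binEnt (p e) := by
  simp only [bernoulliPi, shannonEnt_pi, shannonEnt_bernoulliMeasure]

lemma hasSubgaussianMGF_mul_toNat_sub {w : ℝ} (hw : |w| ≤ 1) (p : unitInterval) :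
    HasSubgaussianMGF (fun b : Bool => w * (b.toNat - p)) 1 (bernoulliMeasure true false p) := by
  have hmem (b : Bool) : w * (b.toNat : ℝ) ∈ Icc (-1 : ℝ) 1 := by
    cases b <;> simp [abs_le.1 hw]
  have hmean : ∫ b : Bool, w * (b.toNat : ℝ) ∂bernoulliMeasure true false p = w * p := by
    rw [integral_bernoulliMeasure]; simp [mul_comm]
  have := hasSubgaussianMGF_of_mem_Icc (X := fun b : Bool => w * (b.toNat : ℝ))
    (Measurable.of_discrete.aemeasurable (μ := bernoulliMeasure true false p))
    (Eventually.of_forall hmem)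
  rw [hmean] at this
  simp only [mul_sub]
  convert this using 1
  norm_num

lemma bernoulliPi_le_sum_real_le {w : E → ℝ} (hw : ∀ e, |w e| ≤ 1) {t : ℝ} (ht : 0 ≤ t) :
    (bernoulliPi p).real {b | t ≤ ∑ e, w e * ((b e).toNat - p e)} ≤
      Real.exp (-t ^ 2 / (2 * Fintype.card E)) := by
  have h := HasSubgaussianMGF.measure_sum_ge_le_of_iIndepFun (μ := bernoulliPi p)
    (X := fun e b => w e * ((b e).toNat - p e)) (c := fun _ => 1) (s := Finset.univ)
    (iIndepFun_pi (X := fun e (b : Bool) => w e * (b.toNat - p e))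
      fun e => Measurable.of_discrete.aemeasurable)
    (fun e _ => ?_) ht
  · simpa using h
  · refine HasSubgaussianMGF.of_map (μ := bernoulliPi p) (Y := Function.eval (β := fun _ => Bool) e)
      (X := fun b : Bool => w e * (b.toNat - p e)) (measurable_pi_apply e).aemeasurable ?_
    rw [bernoulliPi, (measurePreserving_eval _ e).map_eq]
    exact hasSubgaussianMGF_mul_toNat_sub (hw e) (p e)

lemma bernoulliPi_le_abs_sum_real_le {w : E → ℝ} (hw : ∀ e, |w e| ≤ 1) {t : ℝ} (ht : 0 ≤ t) :
    (bernoulliPi p).real {b | t ≤ |∑ e, w e * ((b e).toNat - p e)|} ≤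
      2 * Real.exp (-t ^ 2 / (2 * Fintype.card E)) := by
  have hneg := bernoulliPi_le_sum_real_le p (w := fun e => -w e)
    (fun e => (abs_neg _).trans_le (hw e)) ht
  simp only [neg_mul, Finset.sum_neg_distrib] at hneg
  simp only [le_abs, ofPred_or]
  linarith [measureReal_union_le (μ := bernoulliPi p) {b | t ≤ ∑ e, w e * ((b e).toNat - p e)}
    {b | t ≤ -∑ e, w e * ((b e).toNat - p e)}, bernoulliPi_le_sum_real_le p hw ht]

end Concentration

section DiscreteCut

lemma exists_finset_sum_mul_le {ι : Type*} [Fintype ι] {x : ι → ℝ} {L : ℝ}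
    (hx : ∀ u, x u ∈ Icc 0 L) (f : ι → ℝ) :
    ∃ S : Finset ι, ∑ u, x u * f u ≤ L * ∑ u ∈ S, f u := by
  classical
  refine ⟨Finset.univ.filter fun u => 0 ≤ f u, ?_⟩
  rw [Finset.mul_sum, Finset.sum_filter]
  refine Finset.sum_le_sum fun u _ => ?_
  split_ifs with h
  · exact mul_le_mul_of_nonneg_right (hx u).2 h
  · exact mul_nonpos_of_nonneg_of_nonpos (hx u).1 (not_le.1 h).le

variable {ι κ : Type*} [Fintype ι] [Fintype κ] {x : ι → ℝ} {y : κ → ℝ} {L : ℝ}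

lemma exists_finset_sum_mul_mul_le (hL : 0 ≤ L) (hx : ∀ u, x u ∈ Icc 0 L)
    (hy : ∀ v, y v ∈ Icc 0 L) (d : ι → κ → ℝ) :
    ∃ S : Finset ι, ∃ T : Finset κ,
      ∑ u, ∑ v, x u * y v * d u v ≤ L ^ 2 * ∑ u ∈ S, ∑ v ∈ T, d u v := by
  obtain ⟨S, hS⟩ := exists_finset_sum_mul_le hx fun u => ∑ v, y v * d u v
  obtain ⟨T, hT⟩ := exists_finset_sum_mul_le hy fun v => ∑ u ∈ S, d u v
  refine ⟨S, T, ?_⟩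
  calc ∑ u, ∑ v, x u * y v * d u v = ∑ u, x u * ∑ v, y v * d u v := by
        simp only [Finset.mul_sum, mul_assoc]
    _ ≤ L * ∑ v, y v * ∑ u ∈ S, d u v := by
        simpa only [Finset.mul_sum, Finset.sum_comm (s := S)] using hS
    _ ≤ L * (L * ∑ v ∈ T, ∑ u ∈ S, d u v) := by gcongr
    _ = L ^ 2 * ∑ u ∈ S, ∑ v ∈ T, d u v := by rw [Finset.sum_comm]; ring

lemma abs_sum_mul_mul_le (hL : 0 ≤ L) (hx : ∀ u, x u ∈ Icc 0 L) (hy : ∀ v, y v ∈ Icc 0 L)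
    {d : ι → κ → ℝ} {K : ℝ} (hd : ∀ S T, |∑ u ∈ S, ∑ v ∈ T, d u v| ≤ K) :
    |∑ u, ∑ v, x u * y v * d u v| ≤ L ^ 2 * K := by
  obtain ⟨S, T, hle⟩ := exists_finset_sum_mul_mul_le hL hx hy d
  obtain ⟨S', T', hge⟩ := exists_finset_sum_mul_mul_le hL hx hy fun u v => -d u v
  simp only [mul_neg, Finset.sum_neg_distrib] at hge
  refine abs_le'.2 ⟨hle.trans ?_, hge.trans ?_⟩
  · gcongr
    exact (le_abs_self _).trans (hd S T)
  · rw [← mul_neg]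
    gcongr
    exact (neg_le_abs _).trans (hd S' T')

end DiscreteCut

section CutDistance

variable {n : ℕ} {W : ℝ → ℝ → ℝ} {μ ν : Measure ℝ}

lemma abs_integral_sub_sum_cellAvg_le (hW : IsGraphon W) (hn : n ≠ 0) (hμ : μ ≤ unitVolume)
    (hν : ν ≤ unitVolume) :
    |∫ p, W p.1 p.2 ∂(μ.prod ν) -
        ∑ u, ∑ v, μ.real (cell n u) * ν.real (cell n v) * cellAvg n W u v| ≤
      cellDeviation n W := by
  have := isFiniteMeasure_of_le _ hμ
  have := isFiniteMeasure_of_le _ hν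
  have hcell (u v : Fin n) : ∫ p, W p.1 p.2 ∂((μ.restrict (cell n u)).prod (ν.restrict (cell n v)))
      - μ.real (cell n u) * ν.real (cell n v) * cellAvg n W u v =
      ∫ p, (W p.1 p.2 - cellAvg n W u v)
        ∂((μ.restrict (cell n u)).prod (ν.restrict (cell n v))) := by
    rw [integral_sub (hW.integrable _) (integrable_const _), integral_const, Measure.prod_restrict,
      measureReal_restrict_apply_univ, measureReal_prod_prod, smul_eq_mul]
  rw [integral_prod_eq_sum_sum (sum_restrict_cell hn hμ) (sum_restrict_cell hn hν)
    (hW.integrable _)]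
  simp only [← Finset.sum_sub_distrib, hcell]
  refine (Finset.abs_sum_le_sum_abs _ _).trans (Finset.sum_le_sum fun u _ => ?_)
  refine (Finset.abs_sum_le_sum_abs _ _).trans (Finset.sum_le_sum fun v _ => ?_)
  exact abs_integral_le_integral_abs.trans (integral_mono_measure
    (Measure.prod_mono (Measure.restrict_mono le_rfl hμ) (Measure.restrict_mono le_rfl hν))
    (Eventually.of_forall fun _ => abs_nonneg _) ((hW.integrable _).sub (integrable_const _)).abs)

lemma dCut_graphonOfGraph_le (hW : IsGraphon W) (hn : n ≠ 0) {G : SimpleGraph (Fin n)} {K : ℝ}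
    (hG : ∀ S T : Finset (Fin n),
      |∑ u ∈ S, ∑ v ∈ T, (realAdj G u v - cellAvg n W u v)| ≤ K) :
    dCut (graphonOfGraph G) W ≤ K / n ^ 2 + cellDeviation n W := by
  refine cutNorm_le fun S T _ _ => ?_
  have hμ : unitVolume.restrict S ≤ unitVolume := Measure.restrict_le_self
  have hν : unitVolume.restrict T ≤ unitVolume := Measure.restrict_le_self
  have hmass {ρ : Measure ℝ} (hρ : ρ ≤ unitVolume) (u : Fin n) :
      ρ.real (cell n u) ∈ Icc 0 (n : ℝ)⁻¹ := by
    rw [← cellMeasure_real_univ u, cellMeasure, measureReal_restrict_apply_univ]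
    exact ⟨measureReal_nonneg, ENNReal.toReal_mono (measure_ne_top _ _) (hρ _)⟩
  have hround := abs_sum_mul_mul_le (by positivity) (hmass hμ) (hmass hν) hG
  have hstep := abs_integral_sub_sum_cellAvg_le hW hn hμ hν
  have hgraph := integral_graphonOfGraph G hn hμ hν (f := fun x => x) continuous_id
  rw [← Measure.prod_restrict, integral_sub ((isGraphon_graphonOfGraph G).integrable _)
    (hW.integrable _), hgraph]
  simp only [mul_sub, Finset.sum_sub_distrib] at hround
  rw [inv_pow, inv_mul_eq_div] at hround
  rw [abs_sub_comm] at hstep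
  exact (abs_sub_le _ _ _).trans (add_le_add hround hstep)

end CutDistance

section CutWeight

variable {n : ℕ}

/-- The weight of the entry `(u, v)` in the symmetrisation of the sum over `S × T`. -/
def cutWeight (S T : Finset (Fin n)) (u v : Fin n) : ℝ :=
  ((if u ∈ S ∧ v ∈ T then 1 else 0) + if v ∈ S ∧ u ∈ T then 1 else 0) / 2

lemma cutWeight_comm (S T : Finset (Fin n)) (u v : Fin n) :
    cutWeight S T u v = cutWeight S T v u := by
  rw [cutWeight, cutWeight, add_comm]

lemma abs_cutWeight_le_one (S T : Finset (Fin n)) (u v : Fin n) : |cutWeight S T u v| ≤ 1 := by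
  unfold cutWeight
  split_ifs <;> norm_num

lemma sum_sum_eq_sum_cutWeight_mul {d : Fin n → Fin n → ℝ} (hd : ∀ u v, d u v = d v u)
    (S T : Finset (Fin n)) :
    ∑ u ∈ S, ∑ v ∈ T, d u v = ∑ u, ∑ v, cutWeight S T u v * d u v := by
  have hone : ∑ u ∈ S, ∑ v ∈ T, d u v = ∑ u, ∑ v, (if u ∈ S ∧ v ∈ T then 1 else 0) * d u v := by
    simp [ite_and]
  have hswap : ∑ u ∈ S, ∑ v ∈ T, d u v = ∑ u, ∑ v, (if v ∈ S ∧ u ∈ T then 1 else 0) * d u v := by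
    rw [hone, Finset.sum_comm]
    simp only [hd]
  simp only [cutWeight, div_mul_eq_mul_div, add_mul, ← Finset.sum_div, Finset.sum_add_distrib]
  rw [← hone, ← hswap, add_self_div_two]

lemma abs_sum_sum_le_add_two_mul_abs {d : Fin n → Fin n → ℝ} (hd : ∀ u v, d u v = d v u)
    (hdiag : ∀ u, |d u u| ≤ 1) (S T : Finset (Fin n)) :
    |∑ u ∈ S, ∑ v ∈ T, d u v| ≤
      n + 2 * |∑ e : VertexPair n, cutWeight S T e.1.1 e.1.2 * d e.1.1 e.1.2| := by
  have hle : |∑ u, cutWeight S T u u * d u u| ≤ n := by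
    calc |∑ u, cutWeight S T u u * d u u| ≤ ∑ u, |cutWeight S T u u * d u u| :=
          Finset.abs_sum_le_sum_abs _ _
      _ ≤ ∑ _u : Fin n, (1 : ℝ) := Finset.sum_le_sum fun u _ => by
          rw [abs_mul]
          exact mul_le_one₀ (abs_cutWeight_le_one S T u u) (abs_nonneg _) (hdiag u)
      _ = n := by simp
  rw [sum_sum_eq_sum_cutWeight_mul hd, sum_sum_eq_sum_diag_add_two_mul_sum fun u v => by
    rw [cutWeight_comm, hd]]
  refine (abs_add_le _ _).trans (add_le_add hle ?_)
  rw [abs_mul, abs_two]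

end CutWeight

section CutNeighbourhood

variable {n : ℕ} {W : ℝ → ℝ → ℝ}

/-- The edge probabilities of the random graph on `n` vertices sampled from the cell averages
of `W`. -/
def edgeProb (n : ℕ) (hW : IsGraphon W) (e : VertexPair n) : unitInterval :=
  ⟨cellAvg n W e.1.1 e.1.2, cellAvg_mem_Icc hW _ _⟩

/-- The graphs within cut norm distance `δ` of `W`, encoded by their adjacency indicators. -/
def cutNeighbourhood (n : ℕ) (δ : ℝ) (W : ℝ → ℝ → ℝ) : Set (VertexPair n → Bool) :=
  {b | dCut (graphonOfGraph ((graphEquiv n).symm b)) W ≤ δ}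

lemma ncard_cutNeighbourhood (n : ℕ) (δ : ℝ) (W : ℝ → ℝ → ℝ) :
    (cutNeighbourhood n δ W).ncard = NhatCut n δ W :=
  Nat.card_congr ((graphEquiv n).symm.subtypeEquiv fun _ => Iff.rfl)

lemma mem_cutNeighbourhood_of_forall_abs_sum_lt (hW : IsGraphon W) (hn : n ≠ 0) {t δ : ℝ}
    (hδ : (n + 2 * t) / n ^ 2 + cellDeviation n W ≤ δ) {b : VertexPair n → Bool}
    (hb : ∀ S T, |∑ e : VertexPair n,
      cutWeight S T e.1.1 e.1.2 * ((b e).toNat - edgeProb n hW e)| ≤ t) :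
    b ∈ cutNeighbourhood n δ W := by
  refine (dCut_graphonOfGraph_le hW hn fun S T => ?_).trans hδ
  set G := (graphEquiv n).symm b with hG
  refine (abs_sum_sum_le_add_two_mul_abs (fun u v => ?_) (fun u => ?_) S T).trans ?_
  · rw [realAdj_comm, cellAvg_comm hW]
  · have hadj := realAdj_mem_Icc G u u
    have havg := cellAvg_mem_Icc hW (n := n) u u
    exact abs_sub_le_iff.2 ⟨by linarith [hadj.2, havg.1], by linarith [hadj.1, havg.2]⟩
  · simp only [realAdj_vertexPair, hG, Equiv.apply_symm_apply]
    have hcut := hb S T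
    simp only [edgeProb] at hcut
    linarith

lemma bernoulliPi_cutNeighbourhood_compl_le (hW : IsGraphon W) (hn : n ≠ 0) {t δ : ℝ} (ht : 0 ≤ t)
    (hδ : (n + 2 * t) / n ^ 2 + cellDeviation n W ≤ δ) :
    (bernoulliPi (edgeProb n hW)).real (cutNeighbourhood n δ W)ᶜ ≤
      4 ^ n * (2 * Real.exp (-t ^ 2 / (2 * choose2 n))) := by
  set bad : Finset (Fin n) × Finset (Fin n) → Set (VertexPair n → Bool) := fun P =>
    {b | t ≤ |∑ e, cutWeight P.1 P.2 e.1.1 e.1.2 * ((b e).toNat - edgeProb n hW e)|}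
  have hsub : (cutNeighbourhood n δ W)ᶜ ⊆ ⋃ P, bad P := fun b hb => by
    by_contra hgood
    simp only [mem_iUnion, not_exists] at hgood
    exact hb (mem_cutNeighbourhood_of_forall_abs_sum_lt hW hn hδ fun S T =>
      (not_le.1 (hgood (S, T))).le)
  calc (bernoulliPi (edgeProb n hW)).real (cutNeighbourhood n δ W)ᶜ
      ≤ (bernoulliPi (edgeProb n hW)).real (⋃ P, bad P) := measureReal_mono hsub
    _ ≤ ∑ P, (bernoulliPi (edgeProb n hW)).real (bad P) := measureReal_iUnion_fintype_le _
    _ ≤ ∑ _P : Finset (Fin n) × Finset (Fin n), 2 * Real.exp (-t ^ 2 / (2 * choose2 n)) := by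
        refine Finset.sum_le_sum fun P _ => ?_
        rw [← card_vertexPair]
        exact bernoulliPi_le_abs_sum_real_le _ (fun e => abs_cutWeight_le_one _ _ _ _) ht
    _ = 4 ^ n * (2 * Real.exp (-t ^ 2 / (2 * choose2 n))) := by
        simp [← mul_pow]

lemma tendsto_four_pow_mul_exp_neg_mul_sq {a : ℝ} (ha : 0 < a) :
    Tendsto (fun n : ℕ => (4 : ℝ) ^ n * (2 * Real.exp (-(a * n ^ 2)))) atTop (nhds 0) := by
  have hexp : Tendsto (fun x : ℝ => x * Real.log 4 - a * x ^ 2) atTop atBot := by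
    have : Tendsto (fun x : ℝ => x * (Real.log 4 - a * x)) atTop atBot :=
      tendsto_id.atTop_mul_atBot₀
        (tendsto_atBot_add_const_left _ _
          (tendsto_neg_atTop_atBot.comp (tendsto_id.const_mul_atTop ha)))
    exact this.congr fun x => by ring
  have := ((Real.tendsto_exp_atBot.comp hexp).comp tendsto_natCast_atTop_atTop).const_mul 2
  rw [mul_zero] at this
  refine this.congr fun n => ?_
  simp only [Function.comp_apply]
  rw [sub_eq_add_neg, Real.exp_add, Real.exp_nat_mul, Real.exp_log (by norm_num)]
  ring

lemma eventually_bernoulliPi_cutNeighbourhood_compl_le (hW : IsGraphon W) {δ ε : ℝ} (hδ : 0 < δ)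
    (hε : 0 < ε) :
    ∀ᶠ n in atTop, (bernoulliPi (edgeProb n hW)).real (cutNeighbourhood n δ W)ᶜ ≤ ε := by
  have hinv := tendsto_inv_atTop_nhds_zero_nat (𝕜 := ℝ).eventually_le_const
    (show 0 < δ / 4 by positivity)
  filter_upwards [eventually_ge_atTop 2, hinv,
    eventually_cellDeviation_le hW (half_pos hδ),
    (tendsto_four_pow_mul_exp_neg_mul_sq (show 0 < (δ / 8) ^ 2 by positivity)).eventually_le_const
      hε] with n hn hinv hdev hexp
  have hclose : (n + 2 * (δ / 8 * n ^ 2)) / n ^ 2 + cellDeviation n W ≤ δ := by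
    have : (n + 2 * (δ / 8 * n ^ 2)) / n ^ 2 = (n : ℝ)⁻¹ + δ / 4 := by field_simp; ring
    linarith
  have hpos : 0 < 2 * choose2 n := mul_pos two_pos (choose2_pos hn)
  refine (bernoulliPi_cutNeighbourhood_compl_le hW (by lia) (by positivity) hclose).trans
    (le_trans ?_ hexp)
  gcongr
  rw [div_le_iff₀ hpos, neg_mul, neg_le_neg_iff, choose2]
  have : 0 ≤ (δ / 8) ^ 2 * (n : ℝ) ^ 3 := by positivity
  linear_combination this

end CutNeighbourhood

section LowerBound

variable {n : ℕ} {W : ℝ → ℝ → ℝ}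

lemma choose2_mul_graphonEnt_sub_le_sum_binEnt (hW : IsGraphon W) (hn : n ≠ 0) :
    choose2 n * graphonEnt W - n / 2 ≤ ∑ e, binEnt (edgeProb n hW e) := by
  have hle := graphonEnt_le_sum_binEnt_cellAvg hW hn
  rw [le_div_iff₀ (by positivity), sum_sum_eq_sum_diag_add_two_mul_sum fun u v => by
    rw [cellAvg_comm hW]] at hle
  have hdiag : ∑ u, binEnt (cellAvg n W u u) ≤ n := by
    calc ∑ u, binEnt (cellAvg n W u u) ≤ ∑ _u : Fin n, (1 : ℝ) :=
          Finset.sum_le_sum fun u _ => (binEnt_mem_Icc (cellAvg_mem_Icc hW u u)).2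
      _ = n := by simp
  have hent : 0 ≤ n * graphonEnt W := mul_nonneg n.cast_nonneg (graphonEnt_mem_Icc hW).1
  simp only [choose2, edgeProb]
  linarith

lemma choose2_mul_graphonEnt_sub_le_logb_NhatCut (hW : IsGraphon W) (hn : n ≠ 0) (δ : ℝ) :
    choose2 n * graphonEnt W - (n / 2 + 1)
        - (bernoulliPi (edgeProb n hW)).real (cutNeighbourhood n δ W)ᶜ * choose2 n ≤
      Real.logb 2 (NhatCut n δ W) := by
  have hent := shannonEnt_le_one_add (bernoulliPi (edgeProb n hW)) (cutNeighbourhood n δ W)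
  have hcard : Real.logb 2 (Fintype.card (VertexPair n → Bool)) = choose2 n := by
    rw [Fintype.card_fun, Fintype.card_bool, Nat.cast_pow, Real.logb_pow, Nat.cast_ofNat,
      Real.logb_self_eq_one one_lt_two, mul_one, card_vertexPair]
  rw [shannonEnt_bernoulliPi, ncard_cutNeighbourhood, hcard] at hent
  linarith [choose2_mul_graphonEnt_sub_le_sum_binEnt hW hn]

lemma eventually_mul_add_le_mul_choose2 (C D : ℝ) {ε : ℝ} (hε : 0 < ε) :
    ∀ᶠ n : ℕ in atTop, C * n + D ≤ ε * choose2 n := by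
  have h : Tendsto (fun x : ℝ => x * (ε / 2 * x - (ε / 2 + C))) atTop atTop :=
    tendsto_id.atTop_mul_atTop₀
      (tendsto_atTop_add_const_right _ _ (tendsto_id.const_mul_atTop (half_pos hε)))
  filter_upwards [(h.comp tendsto_natCast_atTop_atTop).eventually_ge_atTop D] with n hn
  simp only [Function.comp_apply] at hn
  rw [choose2]
  linarith

lemma eventually_graphonEnt_sub_mul_choose2_le (hW : IsGraphon W) {δ ε : ℝ} (hδ : 0 < δ)
    (hε : 0 < ε) :
    ∀ᶠ n in atTop, (graphonEnt W - ε) * choose2 n ≤ Real.logb 2 (NhatCut n δ W) := by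
  filter_upwards [eventually_ne_atTop 0, eventually_mul_add_le_mul_choose2 (1 / 2) 1 (half_pos hε),
    eventually_bernoulliPi_cutNeighbourhood_compl_le hW hδ (half_pos hε)] with n hn hlow hbad
  have hnonneg : 0 ≤ choose2 n := by rw [← card_vertexPair]; positivity
  linarith [choose2_mul_graphonEnt_sub_le_logb_NhatCut hW hn δ,
    mul_le_mul_of_nonneg_right hbad hnonneg]

end LowerBound

section UpperBound

variable {A : Set (ℝ → ℝ → ℝ)} {n : ℕ} {δ ε : ℝ}

lemma exists_ncard_exists_codeLengthLE_le (s : Finset RatBlockModel) :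
    ∃ K : ℝ, 1 ≤ K ∧ ∀ n ≠ 0, ∀ c : ℝ,
      ({G : SimpleGraph (Fin n) | ∃ m ∈ s, CodeLengthLE m.prob (graphonOfGraph G) c}.ncard : ℝ) ≤
        K ^ n * 2 ^ (n ^ 2 * c / 2) := by
  obtain ⟨L, hL, hsL⟩ := exists_nonneg_forall_mem_le s fun m => (m.card : ℝ)
  refine ⟨(s.card + 1) * (L + 1), by nlinarith [s.card.cast_nonneg (α := ℝ)], fun n hn c => ?_⟩
  have hunion : {G : SimpleGraph (Fin n) | ∃ m ∈ s, CodeLengthLE m.prob (graphonOfGraph G) c} =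
      ⋃ m ∈ s, {G | CodeLengthLE m.prob (graphonOfGraph G) c} := by
    ext G
    simp
  calc _ ≤ ∑ m ∈ s, ({G : SimpleGraph (Fin n) |
          CodeLengthLE m.prob (graphonOfGraph G) c}.ncard : ℝ) := by
        rw [hunion]
        exact_mod_cast s.set_ncard_biUnion_le _
    _ ≤ ∑ _m ∈ s, (L + 1) ^ n * 2 ^ (n ^ 2 * c / 2) := Finset.sum_le_sum fun m hm => by
        refine (ncard_codeLengthLE_le m.isBlockModel n c).trans ?_
        rw [Fintype.card_fin]
        gcongr
        linarith [hsL m hm]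
    _ = s.card * (L + 1) ^ n * 2 ^ (n ^ 2 * c / 2) := by
        rw [Finset.sum_const, nsmul_eq_mul, mul_assoc]
    _ ≤ ((s.card + 1) * (L + 1)) ^ n * 2 ^ (n ^ 2 * c / 2) := by
        rw [mul_pow]
        gcongr
        exact (lt_add_one _).le.trans (le_self_pow₀ (by simp) hn)

lemma logb_two_natCast_le {N : ℕ} {K x : ℝ} (hK : 1 ≤ K) (hx : 0 ≤ x) (hN : N ≤ K ^ n * 2 ^ x) :
    Real.logb 2 N ≤ n * Real.logb 2 K + x := by
  rcases N.eq_zero_or_pos with rfl | hpos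
  · have := Real.logb_nonneg one_lt_two hK
    simp only [Nat.cast_zero, Real.logb_zero]
    positivity
  · refine (Real.logb_le_logb_of_le one_lt_two (by exact_mod_cast hpos) hN).trans_eq ?_
    rw [Real.logb_mul (by positivity) (by positivity), Real.logb_pow,
      Real.logb_rpow two_pos one_lt_two.ne']

lemma exists_forall_eventually_logb_NCutSet_le (hA : ∀ W ∈ A, IsGraphon W) (hne : A.Nonempty)
    (hcomp : CutCompact A) (hε : 0 < ε) :
    ∃ δ₀ > 0, ∀ δ < δ₀, ∀ᶠ n in atTop,
      Real.logb 2 (NCutSet n δ A) ≤ (sSup (graphonEnt '' A) + ε) * choose2 n := by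
  obtain ⟨s, δ₀, hδ₀, hs⟩ := hcomp.exists_finset_codeLengthLE_of_deltaCut_lt hA (half_pos hε)
  obtain ⟨K, hK, hcount⟩ := exists_ncard_exists_codeLengthLE_le s
  set c := sSup (graphonEnt '' A) + ε / 2 with hc
  have hc_nonneg : 0 ≤ c :=
    add_nonneg (Real.sSup_nonneg (forall_mem_image.2 fun W hW => (graphonEnt_mem_Icc (hA W hW)).1))
      (half_pos hε).le
  refine ⟨δ₀, hδ₀, fun δ hδ => ?_⟩
  filter_upwards [eventually_ne_atTop 0,
    eventually_mul_add_le_mul_choose2 (Real.logb 2 K + c / 2) 0 (half_pos hε)] with n hn hlow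
  have hsub : {G : SimpleGraph (Fin n) | sInf ((fun W => deltaCut (graphonOfGraph G) W) '' A) ≤ δ} ⊆
      {G | ∃ m ∈ s, CodeLengthLE m.prob (graphonOfGraph G) c} := fun G hG => by
    obtain ⟨_, ⟨W, hWA, rfl⟩, hlt⟩ := exists_lt_of_csInf_lt (hne.image _) (hG.trans_lt hδ)
    exact hs _ (isGraphon_graphonOfGraph G) ⟨W, hWA, hlt⟩
  have hN : (NCutSet n δ A : ℝ) ≤ K ^ n * 2 ^ (n ^ 2 * c / 2) :=
    le_trans (by exact_mod_cast ncard_le_ncard hsub) (hcount n hn c)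
  refine (logb_two_natCast_le hK (by positivity) hN).trans ?_
  have hsum : sSup (graphonEnt '' A) + ε = c + ε / 2 := by rw [hc]; ring
  rw [hsum, add_mul]
  refine le_trans (le_of_eq ?_) (add_le_add_right hlow _)
  rw [choose2]
  ring

end UpperBound

section Limit

variable {A : Set (ℝ → ℝ → ℝ)} {W : ℝ → ℝ → ℝ}

lemma NhatCut_le_NCutSet (hWA : W ∈ A) (n : ℕ) (δ : ℝ) : NhatCut n δ W ≤ NCutSet n δ A := by
  refine ncard_le_ncard (s := {G : SimpleGraph (Fin n) | dCut (graphonOfGraph G) W ≤ δ})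
    fun G hG => ?_
  have hbdd : BddBelow ((fun W => deltaCut (graphonOfGraph G) W) '' A) :=
    ⟨0, forall_mem_image.2 fun W _ => deltaCut_nonneg _ W⟩
  exact (csInf_le hbdd (mem_image_of_mem _ hWA)).trans ((deltaCut_le_dCut _ _).trans hG)

lemma logb_two_natCast_mono {M N : ℕ} (h : M ≤ N) : Real.logb 2 M ≤ Real.logb 2 N := by
  rcases M.eq_zero_or_pos with rfl | hpos
  · rw [Nat.cast_zero, Real.logb_zero]
    exact div_nonneg (Real.log_natCast_nonneg N) (Real.log_nonneg one_le_two)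
  · exact Real.logb_le_logb_of_le one_lt_two (by exact_mod_cast hpos) (by exact_mod_cast h)

lemma tendsto_liminf_and_tendsto_limsup {ι α : Type*} {l : Filter ι} {L : Filter α} [L.NeBot]
    {x : ι → α → ℝ} {s : ℝ} (hlow : ∀ ε > 0, ∀ᶠ i in l, ∀ᶠ a in L, s - ε ≤ x i a)
    (hupp : ∀ ε > 0, ∀ᶠ i in l, ∀ᶠ a in L, x i a ≤ s + ε) :
    Tendsto (fun i => liminf (x i) L) l (nhds s) ∧
      Tendsto (fun i => limsup (x i) L) l (nhds s) := by
  have hbounds (ε : ℝ) (hε : 0 < ε) : ∀ᶠ i in l, s - ε ≤ liminf (x i) L ∧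
      liminf (x i) L ≤ limsup (x i) L ∧ limsup (x i) L ≤ s + ε := by
    filter_upwards [hlow ε hε, hupp ε hε] with i hi hi'
    have hbelow : IsBoundedUnder (· ≥ ·) L (x i) := ⟨s - ε, by simpa using hi⟩
    have habove : IsBoundedUnder (· ≤ ·) L (x i) := ⟨s + ε, by simpa using hi'⟩
    exact ⟨le_liminf_of_le habove.isCoboundedUnder_ge hi, liminf_le_limsup habove hbelow,
      limsup_le_of_le hbelow.isCoboundedUnder_le hi'⟩
  constructor
  all_goals
    refine Metric.tendsto_nhds.2 fun ε hε => ?_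
    filter_upwards [hbounds (ε / 2) (half_pos hε)] with i ⟨hlow, hle, hupp⟩
    rw [Real.dist_eq, abs_lt]
    constructor <;> linarith

end Limit

/-- Lemma 4.7: for a nonempty `δ_□`-compact set `A` of graphons, the
maximum entropy over `A` is attained, and
`lim_{δ→0⁺} liminf_n log₂ N_□(n,δ;A)/C(n,2) = lim_{δ→0⁺} limsup_n log₂ N_□(n,δ;A)/C(n,2)
 = max_{W ∈ A} Ent(W)`. -/
theorem stmt8 (A : Set (ℝ → ℝ → ℝ)) (hA : ∀ W ∈ A, IsGraphon W) (hne : A.Nonempty)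
    (hcomp : CutCompact A) :
    (∃ Wstar ∈ A, graphonEnt Wstar = sSup (graphonEnt '' A)) ∧
    Filter.Tendsto (fun δ : ℝ =>
        Filter.liminf (fun n : ℕ => Real.logb 2 (NCutSet n δ A : ℝ) / choose2 n)
          Filter.atTop)
      (nhdsWithin 0 (Set.Ioi 0)) (nhds (sSup (graphonEnt '' A))) ∧
    Filter.Tendsto (fun δ : ℝ =>
        Filter.limsup (fun n : ℕ => Real.logb 2 (NCutSet n δ A : ℝ) / choose2 n)
          Filter.atTop)
      (nhdsWithin 0 (Set.Ioi 0)) (nhds (sSup (graphonEnt '' A))) := by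
  obtain ⟨Wstar, hWstar, hmax⟩ := hcomp.exists_graphonEnt_eq_sSup hA hne
  refine ⟨⟨Wstar, hWstar, hmax⟩, tendsto_liminf_and_tendsto_limsup (fun ε hε => ?_) fun ε hε => ?_⟩
  · filter_upwards [self_mem_nhdsWithin] with δ hδ
    filter_upwards [eventually_graphonEnt_sub_mul_choose2_le (hA _ hWstar) hδ hε,
      eventually_ge_atTop 2] with n hlow hn
    rw [le_div_iff₀ (choose2_pos hn), ← hmax]
    exact hlow.trans (logb_two_natCast_mono (NhatCut_le_NCutSet hWstar n δ))
  · obtain ⟨δ₀, hδ₀, hcount⟩ := exists_forall_eventually_logb_NCutSet_le hA hne hcomp hε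
    filter_upwards [Ioo_mem_nhdsGT hδ₀] with δ hδ
    filter_upwards [hcount δ hδ.2, eventually_ge_atTop 2] with n hupp hn
    rwa [div_le_iff₀ (choose2_pos hn)]

end
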